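/- arXiv:2108.13569 — 3 statements merged into one kernel-verified Lean document; each statement's English description precedes it below -/
import Mathlib

section
/- Let K₁,…,K_d be a strongly separated family of convex bodies in ℝ^d. Then there exist two distinct affine hyperplanes, given by pairs (u₁,α₁) and (u₂,α₂) with {x : ⟨u₁,x⟩ = α₁} ≠ {x : ⟨u₂,x⟩ = α₂}, each tangent to every Kᵢ with every Kᵢ on the same closed side: for j = 1,2 and every i, H_{uⱼ,αⱼ} ∩ Kᵢ ≠ ∅ and Kᵢ ⊆ {x : ⟨uⱼ,x⟩ ≥ αⱼ}. -/
open scoped InnerProductSpace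

/-- A family of sets in `ℝ^d` is strongly separated if every subset of indices can be
strictly separated from its complement by an affine hyperplane. -/
def StronglySeparated {d m : ℕ} (S : Fin m → Set (EuclideanSpace ℝ (Fin d))) : Prop :=
  ∀ I : Finset (Fin m), ∃ (u : EuclideanSpace ℝ (Fin d)) (α : ℝ), u ≠ 0 ∧
    (∀ i ∈ I, ∀ x ∈ S i, ⟪u, x⟫_ℝ < α) ∧ (∀ i, i ∉ I → ∀ x ∈ S i, α < ⟪u, x⟫_ℝ)

namespace TwoTangents

variable {d : ℕ}

/-- The functional `R ↦ det (R, x₁, …, x_d)`. -/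
noncomputable def F (x : Fin d → (Fin (d+1) → ℝ)) : (Fin (d+1) → ℝ) →ₗ[ℝ] ℝ :=
  (Matrix.detRowAlternating (R := ℝ) (n := Fin (d+1))).toMultilinearMap.toLinearMap
    (Fin.cons 0 x : Fin (d+1) → (Fin (d+1) → ℝ)) 0

lemma F_apply (x : Fin d → (Fin (d+1) → ℝ)) (R : Fin (d+1) → ℝ) :
    F x R = Matrix.det (Matrix.of (Fin.cons R x : Fin (d+1) → (Fin (d+1) → ℝ))) := by
  simp only [F, MultilinearMap.toLinearMap_apply, Fin.update_cons_zero]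
  rfl

lemma F_ne_zero {x : Fin d → (Fin (d+1) → ℝ)} (hx : LinearIndependent ℝ x)
    {v : (Fin (d+1) → ℝ) →ₗ[ℝ] ℝ} (hv : ∀ i, v (x i) = 0) {R : Fin (d+1) → ℝ}
    (hR : 0 < v R) : F x R ≠ 0 := by
  have h1 : LinearIndependent ℝ (Fin.cons R x : Fin (d+1) → (Fin (d+1) → ℝ)) := by
    rw [linearIndependent_finCons]
    refine ⟨hx, fun hmem => ?_⟩
    have hle : Submodule.span ℝ (Set.range x) ≤ LinearMap.ker v := by
      rw [Submodule.span_le]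
      rintro _ ⟨i, rfl⟩
      exact hv i
    have := hle hmem
    rw [LinearMap.mem_ker] at this
    linarith
  rw [F_apply]
  have h2 : IsUnit (Matrix.of (Fin.cons R x : Fin (d+1) → (Fin (d+1) → ℝ))) := by
    rw [← Matrix.linearIndependent_rows_iff_isUnit]
    exact h1
  rw [Matrix.isUnit_iff_isUnit_det] at h2
  exact h2.ne_zero

lemma F_self (x : Fin d → (Fin (d+1) → ℝ)) (i : Fin d) : F x (x i) = 0 := by
  rw [F_apply]
  apply Matrix.det_zero_of_row_eq (i := 0) (j := i.succ) (Fin.succ_ne_zero i).symm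
  rfl

lemma exists_F_ne_zero {x : Fin d → (Fin (d+1) → ℝ)} (hx : LinearIndependent ℝ x) :
    F x ≠ 0 := by
  have hlt : Submodule.span ℝ (Set.range x) < ⊤ := by
    refine lt_top_iff_ne_top.2 fun h => ?_
    have h1 := finrank_range_le_card (R := ℝ) x
    rw [Set.finrank, h, finrank_top] at h1
    simp at h1
  obtain ⟨v, hv, hle⟩ := Submodule.exists_le_ker_of_lt_top _ hlt
  obtain ⟨R, hR⟩ : ∃ R, 0 < v R := by
    obtain ⟨R, hR⟩ := DFunLike.ne_iff.1 hv
    rcases lt_or_gt_of_ne hR with h | h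
    · exact ⟨-R, by simpa using h⟩
    · exact ⟨R, by simpa using h⟩
  intro h0
  have := F_ne_zero hx (v := v) (fun i => hle (Submodule.subset_span ⟨i, rfl⟩)) hR
  rw [h0] at this
  exact this rfl

/-- Along continuous paths the orientation sign does not change. -/
lemma path_sign {z : ℝ → Fin d → (Fin (d+1) → ℝ)} {R : ℝ → (Fin (d+1) → ℝ)}
    (hz : ∀ i, ContinuousOn (fun s => z s i) (Set.Icc 0 1)) (hR : ContinuousOn R (Set.Icc 0 1))
    (hind : ∀ s ∈ Set.Icc (0:ℝ) 1, LinearIndependent ℝ (z s))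
    (v : ℝ → ((Fin (d+1) → ℝ) →ₗ[ℝ] ℝ))
    (hv : ∀ s ∈ Set.Icc (0:ℝ) 1, ∀ i, v s (z s i) = 0)
    (hvR : ∀ s ∈ Set.Icc (0:ℝ) 1, 0 < v s (R s)) {ε : ℝ}
    (h0 : 0 < ε * F (z 0) (R 0)) : 0 < ε * F (z 1) (R 1) := by
  have hε : ε ≠ 0 := by rintro rfl; simp at h0
  have hcont : ContinuousOn (fun s => ε * F (z s) (R s)) (Set.Icc 0 1) := by
    refine continuousOn_const.mul ?_
    simp only [F_apply]
    have : ContinuousOn (fun s => (Matrix.of (Fin.cons (R s) (z s) :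
        Fin (d+1) → (Fin (d+1) → ℝ)))) (Set.Icc 0 1) := by
      refine continuousOn_pi.2 fun i => ?_
      refine Fin.cases ?_ (fun i => ?_) i
      · exact hR
      · exact hz i
    exact (Continuous.matrix_det continuous_id).comp_continuousOn this
  by_contra hneg
  push Not at hneg
  have := intermediate_value_Icc' (zero_le_one (α := ℝ)) hcont
  obtain ⟨s, hs, hs0⟩ := this ⟨hneg, h0.le⟩
  have hne := F_ne_zero (hind s hs) (hv s hs) (hvR s hs)
  exact (mul_ne_zero hε hne) hs0

/-- Orientation of a functional relative to a family. -/
def Pos (ε : ℝ) (K : Fin d → Set (Fin (d+1) → ℝ)) (w : (Fin (d+1) → ℝ) →ₗ[ℝ] ℝ) : Prop :=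
  ∀ x : Fin d → (Fin (d+1) → ℝ), (∀ i, x i ∈ K i) → (∀ i, w (x i) = 0) →
    ∀ R, 0 < w R → 0 < ε * F x R

def Indep (K : Fin d → Set (Fin (d+1) → ℝ)) : Prop :=
  ∀ x : Fin d → (Fin (d+1) → ℝ), (∀ i, x i ∈ K i) → LinearIndependent ℝ x

lemma pos_of {ε : ℝ} {K : Fin d → Set (Fin (d+1) → ℝ)} (hK : ∀ i, Convex ℝ (K i))
    (hI : Indep K) {w : (Fin (d+1) → ℝ) →ₗ[ℝ] ℝ} {x : Fin d → (Fin (d+1) → ℝ)}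
    (hx : ∀ i, x i ∈ K i) (hw : ∀ i, w (x i) = 0) {R : Fin (d+1) → ℝ} (hR : 0 < w R)
    (h : 0 < ε * F x R) : Pos ε K w := by
  intro x' hx' hw' R' hR'
  have := path_sign (z := fun s i => (1 - s) • x i + s • x' i)
    (R := fun s => (1 - s) • R + s • R') (ε := ε) (by intro i; fun_prop) (by fun_prop)
    (by
      intro s hs
      refine hI _ fun i => ?_
      exact hK i (hx i) (hx' i) (by linarith [hs.2]) hs.1 (by ring))
    (fun _ => w) (by intro s hs i; simp [hw, hw'])
    (by
      intro s hs
      simp only [map_add, map_smul, smul_eq_mul]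
      rcases hs.1.eq_or_lt with h | h
      · rw [← h]; simpa using hR
      · have := mul_pos h hR'
        have := mul_nonneg (sub_nonneg.2 hs.2) hR.le
        linarith) (by simpa using h)
  simpa using this

lemma parallel_of {w w' : (Fin (d+1) → ℝ) →ₗ[ℝ] ℝ} (hw : w ≠ 0) (hw' : w' ≠ 0)
    (h : ∀ R, 0 < w R → 0 ≤ w' R) : ∃ c : ℝ, 0 < c ∧ w' = c • w := by
  obtain ⟨R0, hR0⟩ : ∃ R, w R = 1 := by
    obtain ⟨R, hR⟩ := DFunLike.ne_iff.1 hw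
    refine ⟨(w R)⁻¹ • R, ?_⟩
    simp only [map_smul, smul_eq_mul]
    exact inv_mul_cancel₀ hR
  have hker : ∀ z, w z = 0 → w' z = 0 := by
    intro z hz
    by_contra hne
    have := h (R0 + (-(w' R0 + 1) / w' z) • z) (by simp [hz, hR0])
    simp only [map_add, map_smul, smul_eq_mul, div_mul_cancel₀ _ hne] at this
    linarith
  have heq : w' = (w' R0) • w := by
    apply LinearMap.ext
    intro z
    have := hker (z - (w z) • R0) (by simp [hR0])
    simp only [map_sub, map_smul, smul_eq_mul] at this
    simp
    linarith
  refine ⟨w' R0, lt_of_le_of_ne (h R0 (by simp [hR0])) ?_, heq⟩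
  intro h0
  apply hw'
  rw [heq, ← h0, zero_smul]

lemma unique {ε : ℝ} {K : Fin d → Set (Fin (d+1) → ℝ)} (hK : ∀ i, Convex ℝ (K i))
    (hI : Indep K) {w w' : (Fin (d+1) → ℝ) →ₗ[ℝ] ℝ} (hw : w ≠ 0) (hw' : w' ≠ 0)
    (hp : Pos ε K w) (hp' : Pos ε K w')
    (h : ∀ i, ∃ x ∈ K i, ∃ x' ∈ K i, w x = 0 ∧ w' x' = 0 ∧ 0 ≤ w x' * w' x) :
    ∃ c : ℝ, 0 < c ∧ w' = c • w := by
  by_contra hcon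
  obtain ⟨R, hR, hR'⟩ : ∃ R, 0 < w R ∧ w' R < 0 := by
    by_contra hc
    push Not at hc
    exact hcon (parallel_of hw hw' hc)
  have hpath : ∀ i, ∃ z : ℝ → (Fin (d+1) → ℝ), ContinuousOn z (Set.Icc 0 1) ∧
      ∀ s ∈ Set.Icc (0:ℝ) 1, z s ∈ K i ∧ (1 - s) * w (z s) - s * w' (z s) = 0 := by
    intro i
    obtain ⟨x, hx, x', hx', h1, h2, h3⟩ := h i
    by_cases ha : w x' = 0
    · exact ⟨fun _ => x', continuousOn_const, fun s _ => ⟨hx', by simp [ha, h2]⟩⟩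
    by_cases hb : w' x = 0
    · exact ⟨fun _ => x, continuousOn_const, fun s _ => ⟨hx, by simp [hb, h1]⟩⟩
    have hA : 0 < |w x'| := abs_pos.2 ha
    have hB : 0 < |w' x| := abs_pos.2 hb
    have hAB : |w' x| * w x' = |w x'| * w' x := by
      rcases lt_or_gt_of_ne ha with h | h
      · have : w' x < 0 := lt_of_le_of_ne (by nlinarith) hb
        rw [abs_of_neg h, abs_of_neg this]; ring
      · have : 0 < w' x := lt_of_le_of_ne (by nlinarith) (Ne.symm hb)
        rw [abs_of_pos h, abs_of_pos this]; ring
    generalize |w x'| = A at *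
    generalize |w' x| = B at *
    have hden : ∀ s ∈ Set.Icc (0:ℝ) 1, 0 < (1 - s) * A + s * B := by
      intro s hs
      rcases hs.1.eq_or_lt with h | h
      · rw [← h]; simpa using hA
      · have := mul_pos h hB
        have := mul_nonneg (sub_nonneg.2 hs.2) hA.le
        linarith
    refine ⟨fun s => ((1 - s) * A / ((1 - s) * A + s * B)) • x +
      (s * B / ((1 - s) * A + s * B)) • x', ?_, ?_⟩
    · refine ContinuousOn.add (ContinuousOn.smul (ContinuousOn.div (by fun_prop) (by fun_prop)
        (fun s hs => (hden s hs).ne')) continuousOn_const)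
        (ContinuousOn.smul (ContinuousOn.div (by fun_prop) (by fun_prop)
        (fun s hs => (hden s hs).ne')) continuousOn_const)
    · intro s hs
      have hd := hden s hs
      refine ⟨hK i hx hx' ?_ ?_ ?_, ?_⟩
      · exact div_nonneg (mul_nonneg (sub_nonneg.2 hs.2) hA.le) hd.le
      · exact div_nonneg (mul_nonneg hs.1 hB.le) hd.le
      · rw [← add_div, div_self hd.ne']
      · simp only [map_add, map_smul, smul_eq_mul, h1, h2]
        have : (1 - s) * ((1 - s) * A / ((1 - s) * A + s * B) * 0 +
            s * B / ((1 - s) * A + s * B) * w x') -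
          s * ((1 - s) * A / ((1 - s) * A + s * B) * w' x +
            s * B / ((1 - s) * A + s * B) * 0) =
          s * (1 - s) / ((1 - s) * A + s * B) * (B * w x' - A * w' x) := by
            ring
        rw [this, hAB]; simp
  choose z hzc hz using hpath
  have h0m : (0:ℝ) ∈ Set.Icc (0:ℝ) 1 := by simp
  have h1m : (1:ℝ) ∈ Set.Icc (0:ℝ) 1 := by simp
  have h0 := hp (fun i => z i 0) (fun i => (hz i 0 h0m).1)
    (fun i => by simpa using (hz i 0 h0m).2) R hR
  have h1 := path_sign (z := fun s i => z i s) (R := fun _ => R) (ε := ε) hzc continuousOn_const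
    (fun s hs => hI _ fun i => (hz i s hs).1) (fun s => (1 - s) • w - s • w')
    (fun s hs i => by simpa using (hz i s hs).2)
    (by
      intro s hs
      simp only [LinearMap.sub_apply, LinearMap.smul_apply, smul_eq_mul]
      rcases hs.1.eq_or_lt with h | h
      · rw [← h]; simpa using hR
      · have := mul_neg_of_pos_of_neg h hR'
        have := mul_nonneg (sub_nonneg.2 hs.2) hR.le
        linarith) h0
  have h2 := hp' (fun i => z i 1) (fun i => (hz i 1 h1m).1)
    (fun i => by simpa using (hz i 1 h1m).2) (-R) (by simpa using hR')
  rw [map_neg] at h2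
  linarith

/-- The one-body step: an abstract minimum argument. -/
lemma exists_min {V : Type*} [NormedAddCommGroup V] [NormedSpace ℝ V] [FiniteDimensional ℝ V]
    {C : Set V} (hC : IsCompact C) (hconv : Convex ℝ C) (hne : C.Nonempty)
    (w : V → (V →ₗ[ℝ] ℝ)) (hw : ∀ y ∈ C, w y y = 0)
    (hpar : ∀ y ∈ C, ∀ z ∈ C, 0 ≤ w y z * w z y → ∃ c : ℝ, 0 < c ∧ w z = c • w y) :
    ∃ y ∈ C, ∀ z ∈ C, 0 ≤ w y z := by
  have hz0 : ∀ y ∈ C, ∀ z ∈ C, 0 ≤ w y z * w z y → w y z = 0 ∧ w z y = 0 := by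
    intro y hy z hz h
    obtain ⟨c, hc, e⟩ := hpar y hy z hz h
    have h1 := hw z hz
    have h2 : w z y = 0 := by rw [e]; simp [hw y hy]
    refine ⟨?_, h2⟩
    rw [e] at h1
    simpa [hc.ne'] using h1
  have hiff : ∀ y ∈ C, ∀ z ∈ C, 0 ≤ w y z → w z y ≤ 0 := by
    intro y hy z hz h
    by_contra hc
    push Not at hc
    have := (hz0 y hy z hz (mul_nonneg h hc.le)).2
    linarith
  have hiff' : ∀ y ∈ C, ∀ z ∈ C, w z y ≤ 0 → 0 ≤ w y z := by
    intro y hy z hz h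
    by_contra hc
    push Not at hc
    have := (hz0 y hy z hz (mul_nonneg_of_nonpos_of_nonpos hc.le h)).1
    linarith
  have htot : ∀ y ∈ C, ∀ z ∈ C, 0 ≤ w y z ∨ 0 ≤ w z y := by
    intro y hy z hz
    rcases le_total 0 (w z y) with h | h
    · exact Or.inr h
    · exact Or.inl (hiff' y hy z hz h)
  have htrans : ∀ y₁ ∈ C, ∀ y₂ ∈ C, ∀ y₃ ∈ C, 0 ≤ w y₁ y₂ → 0 ≤ w y₂ y₃ → 0 ≤ w y₁ y₃ := by
    intro y₁ h₁ y₂ h₂ y₃ h₃ h12 h23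
    by_contra h13
    push Not at h13
    have hd : 0 < w y₁ y₂ - w y₁ y₃ := by linarith
    set t := w y₁ y₂ / (w y₁ y₂ - w y₁ y₃) with ht
    have ht0 : 0 ≤ t := div_nonneg h12 hd.le
    have ht1 : t ≤ 1 := by rw [ht, div_le_one hd]; linarith
    have htm : t * (w y₁ y₂ - w y₁ y₃) = w y₁ y₂ := div_mul_cancel₀ _ hd.ne'
    have h₄ : (1 - t) • y₂ + t • y₃ ∈ C := hconv h₂ h₃ (by linarith) ht0 (by ring)
    set y₄ := (1 - t) • y₂ + t • y₃ with hy4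
    have h14 : w y₁ y₄ = 0 := by
      rw [hy4]; simp only [map_add, map_smul, smul_eq_mul]; linarith
    have h24 : 0 ≤ w y₂ y₄ := by
      rw [hy4]; simp only [map_add, map_smul, smul_eq_mul, hw y₂ h₂]
      have := mul_nonneg ht0 h23
      linarith
    obtain ⟨c, hc, e⟩ := hpar y₁ h₁ y₄ h₄ (by rw [h14]; simp)
    have h42 := hiff y₂ h₂ y₄ h₄ h24
    rw [e] at h42
    simp only [LinearMap.smul_apply, smul_eq_mul] at h42
    have h12' : w y₁ y₂ = 0 := by nlinarith
    obtain ⟨c', hc', e'⟩ := hpar y₁ h₁ y₂ h₂ (by rw [h12']; simp)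
    rw [e'] at h23
    simp only [LinearMap.smul_apply, smul_eq_mul] at h23
    nlinarith
  have hfin : ∀ s : Finset C, ∃ y ∈ C, ∀ z ∈ s, 0 ≤ w y z := by
    classical
    intro s
    induction s using Finset.induction_on with
    | empty => exact ⟨hne.some, hne.some_mem, by simp⟩
    | insert a s _ ih =>
      obtain ⟨y, hy, hys⟩ := ih
      rcases htot y hy a a.2 with h | h
      · refine ⟨y, hy, fun z hz => ?_⟩
        rcases Finset.mem_insert.1 hz with rfl | hz
        · exact h
        · exact hys z hz
      · refine ⟨a, a.2, fun z hz => ?_⟩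
        rcases Finset.mem_insert.1 hz with rfl | hz
        · exact (hw _ z.2).ge
        · exact htrans a a.2 y hy z z.2 h (hys z hz)
  have := hC.inter_iInter_nonempty (fun z : C => {y | w z y ≤ 0})
    (fun z => isClosed_le (w z).continuous_of_finiteDimensional continuous_const)
    (by
      intro s
      obtain ⟨y, hy, hys⟩ := hfin s
      refine ⟨y, hy, ?_⟩
      simp only [Set.mem_iInter]
      exact fun z hz => hiff y hy z z.2 (hys z hz))
  obtain ⟨y, hy, hyz⟩ := this
  simp only [Set.mem_iInter] at hyz
  exact ⟨y, hy, fun z hz => hiff' y hy z hz (hyz ⟨z, hz⟩)⟩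

lemma exists_pos_val {w : (Fin (d+1) → ℝ) →ₗ[ℝ] ℝ} (hw : w ≠ 0) : ∃ R, 0 < w R := by
  obtain ⟨R, hR⟩ := DFunLike.ne_iff.1 hw
  rcases lt_or_gt_of_ne hR with h | h
  · exact ⟨-R, by simpa using h⟩
  · exact ⟨R, by simpa using h⟩

lemma main_exists {ε : ℝ} (hε : ε ≠ 0) (S : Finset (Fin d)) :
    ∀ (K : Fin d → Set (Fin (d+1) → ℝ)), (∀ i, IsCompact (K i)) → (∀ i, Convex ℝ (K i)) →
    (∀ i, (K i).Nonempty) → Indep K → (∀ i ∉ S, (K i).Subsingleton) →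
    ∃ w : (Fin (d+1) → ℝ) →ₗ[ℝ] ℝ, w ≠ 0 ∧ Pos ε K w ∧
      ∀ i, (∃ x ∈ K i, w x = 0) ∧ ∀ x ∈ K i, 0 ≤ w x := by
  classical
  induction S using Finset.induction_on with
  | empty =>
    intro K _ _ hne hI hsub
    choose p hp using hne
    have hpe : ∀ i, ∀ x ∈ K i, x = p i := fun i x hx => hsub i (by simp) hx (hp i)
    refine ⟨ε • F p, smul_ne_zero hε (exists_F_ne_zero (hI p hp)), ?_, fun i => ⟨⟨p i, hp i, ?_⟩, ?_⟩⟩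
    · intro x hx _ R hR
      have : x = p := funext fun i => hpe i _ (hx i)
      rw [this]
      simpa using hR
    · simp [F_self]
    · intro x hx
      rw [hpe i x hx]
      simp [F_self]
  | insert j S _ ih =>
    intro K hcomp hconv hne hI hsub
    have step : ∀ y, ∃ w : (Fin (d+1) → ℝ) →ₗ[ℝ] ℝ, y ∈ K j → w ≠ 0 ∧ Pos ε K w ∧ w y = 0 ∧
        ∀ i, i ≠ j → (∃ x ∈ K i, w x = 0) ∧ ∀ x ∈ K i, 0 ≤ w x := by
      intro y
      by_cases hy : y ∈ K j
      swap
      · exact ⟨0, fun h => absurd h hy⟩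
      have hsubs : ∀ i, Function.update K j {y} i ⊆ K i := by
        intro i
        by_cases h : i = j
        · subst h; simpa using hy
        · simp [h]
      obtain ⟨w, hw, hp, ht⟩ := ih (Function.update K j {y})
        (by
          intro i
          by_cases h : i = j
          · subst h; simp
          · simpa [h] using hcomp i)
        (by
          intro i
          by_cases h : i = j
          · subst h; simp
          · simpa [h] using hconv i)
        (by
          intro i
          by_cases h : i = j
          · subst h; simp
          · simpa [h] using hne i)
        (fun x hx => hI x fun i => hsubs i (hx i))
        (by
          intro i hi
          by_cases h : i = j
          · subst h; simp
          · simpa [h] using hsub i (by simp [h, hi]))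
      refine ⟨w, fun _ => ⟨hw, ?_, ?_, ?_⟩⟩
      · choose x hx hwx using fun i => (ht i).1
        obtain ⟨R, hR⟩ := exists_pos_val hw
        exact pos_of hconv hI (fun i => hsubs i (hx i)) hwx hR (hp x hx hwx R hR)
      · obtain ⟨x, hx, hwx⟩ := (ht j).1
        simp only [Function.update_self, Set.mem_singleton_iff] at hx
        rwa [hx] at hwx
      · intro i hi
        simpa [hi] using ht i
    choose w hw using step
    obtain ⟨y, hy, hmin⟩ := exists_min (hcomp j) (hconv j) (hne j) w (fun y hy => (hw y hy).2.2.1)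
      (by
        intro y hy z hz h
        obtain ⟨a1, a2, a3, a4⟩ := hw y hy
        obtain ⟨b1, b2, b3, b4⟩ := hw z hz
        refine unique hconv hI a1 b1 a2 b2 fun i => ?_
        by_cases hi : i = j
        · subst hi
          exact ⟨y, hy, z, hz, a3, b3, h⟩
        · obtain ⟨x, hx, hx0⟩ := (a4 i hi).1
          obtain ⟨x', hx', hx0'⟩ := (b4 i hi).1
          exact ⟨x, hx, x', hx', hx0, hx0', mul_nonneg ((a4 i hi).2 x' hx') ((b4 i hi).2 x hx)⟩)
    obtain ⟨a1, a2, a3, a4⟩ := hw y hy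
    refine ⟨w y, a1, a2, fun i => ?_⟩
    by_cases hi : i = j
    · subst hi
      exact ⟨⟨y, hy, a3⟩, hmin⟩
    · exact a4 i hi

/-- The lift of a point to homogeneous coordinates. -/
noncomputable def lift (x : EuclideanSpace ℝ (Fin d)) : Fin (d+1) → ℝ := Fin.cons 1 (fun i => x i)

lemma lift_continuous : Continuous (lift (d := d)) := by
  refine continuous_pi fun i => ?_
  refine Fin.cases ?_ (fun i => ?_) i
  · simpa [lift] using continuous_const
  · simp only [lift, Fin.cons_succ]; fun_prop

lemma lift_comb (x y : EuclideanSpace ℝ (Fin d)) {a b : ℝ} (h : a + b = 1) :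
    lift (a • x + b • y) = a • lift x + b • lift y := by
  funext i
  refine Fin.cases ?_ (fun i => ?_) i
  · simp [lift, h]
  · simp [lift]

noncomputable def fnl (u : EuclideanSpace ℝ (Fin d)) (α : ℝ) : (Fin (d+1) → ℝ) →ₗ[ℝ] ℝ :=
  Fintype.linearCombination ℝ (Fin.cons (-α) (fun i => u i) : Fin (d+1) → ℝ)

lemma fnl_lift (u : EuclideanSpace ℝ (Fin d)) (α : ℝ) (x : EuclideanSpace ℝ (Fin d)) :
    fnl u α (lift x) = ⟪u, x⟫_ℝ - α := by
  simp [fnl, lift, Fintype.linearCombination_apply, Fin.sum_univ_succ, PiLp.inner_apply]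
  ring

lemma exists_fnl (w : (Fin (d+1) → ℝ) →ₗ[ℝ] ℝ) : ∃ u α, w = fnl u α := by
  refine ⟨WithLp.toLp 2 (fun i => w (Pi.single i.succ 1)), -w (Pi.single 0 1), ?_⟩
  ext i
  refine Fin.cases ?_ (fun i => ?_) i
  · simp [fnl]
  · simp [fnl]

end TwoTangents

open TwoTangents in
theorem two_sandwiching_tangents_convex_bodies {d : ℕ}
    (K : Fin d → Set (EuclideanSpace ℝ (Fin d)))
    (hcomp : ∀ i, IsCompact (K i)) (hconv : ∀ i, Convex ℝ (K i))
    (hint : ∀ i, (interior (K i)).Nonempty)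
    (hsep : StronglySeparated K) :
    ∃ (u₁ u₂ : EuclideanSpace ℝ (Fin d)) (α₁ α₂ : ℝ), u₁ ≠ 0 ∧ u₂ ≠ 0 ∧
      {x : EuclideanSpace ℝ (Fin d) | ⟪u₁, x⟫_ℝ = α₁} ≠ {x | ⟪u₂, x⟫_ℝ = α₂} ∧
      (∀ i : Fin d, ({x | ⟪u₁, x⟫_ℝ = α₁} ∩ K i).Nonempty ∧
        K i ⊆ {x | α₁ ≤ ⟪u₁, x⟫_ℝ}) ∧
      (∀ i : Fin d, ({x | ⟪u₂, x⟫_ℝ = α₂} ∩ K i).Nonempty ∧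
        K i ⊆ {x | α₂ ≤ ⟪u₂, x⟫_ℝ}) := by
  classical
  have hd : Nonempty (Fin d) := by
    obtain ⟨u, _, hu, _⟩ := hsep ∅
    by_contra hemp
    rw [not_nonempty_iff] at hemp
    exact hu (Subsingleton.elim _ _)
  obtain ⟨i₀⟩ := hd
  have hI : Indep (fun i => Set.image lift (K i)) := by
    intro x hx
    choose p hp hpx using hx
    rw [Fintype.linearIndependent_iff]
    intro c hc
    obtain ⟨u, α, -, h1, h2⟩ := hsep (Finset.univ.filter fun i => c i < 0)
    have h3 : ∑ i, c i * (⟪u, p i⟫_ℝ - α) = 0 := by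
      have := congrArg (fnl u α) hc
      simpa only [map_sum, map_smul, smul_eq_mul, ← hpx, fnl_lift, map_zero] using this
    have h4 : ∀ i, (c i ≠ 0 → 0 < c i * (⟪u, p i⟫_ℝ - α)) := by
      intro i hi
      rcases lt_or_gt_of_ne hi with h | h
      · have := h1 i (by simp [h]) (p i) (hp i)
        exact mul_pos_of_neg_of_neg h (by linarith)
      · have := h2 i (by simp [h.le]) (p i) (hp i)
        exact mul_pos h (by linarith)
    have h5 : ∀ i, 0 ≤ c i * (⟪u, p i⟫_ℝ - α) := by
      intro i
      by_cases h : c i = 0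
      · simp [h]
      · exact (h4 i h).le
    intro i
    by_contra h
    have := (Finset.sum_eq_zero_iff_of_nonneg (fun i _ => h5 i)).1 h3 i (Finset.mem_univ i)
    exact (h4 i h).ne' this
  have hne : ∀ i, (K i).Nonempty := fun i => (hint i).mono interior_subset
  have key : ∀ ε : ℝ, ε ≠ 0 → ∃ (u : EuclideanSpace ℝ (Fin d)) (α : ℝ), u ≠ 0 ∧
      Pos ε (fun i => Set.image lift (K i)) (fnl u α) ∧
      (∀ i : Fin d, ({x | ⟪u, x⟫_ℝ = α} ∩ K i).Nonempty ∧ K i ⊆ {x | α ≤ ⟪u, x⟫_ℝ}) := by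
    intro ε hε
    obtain ⟨w, hw, hp, ht⟩ := main_exists hε Finset.univ (fun i => Set.image lift (K i))
      (fun i => (hcomp i).image lift_continuous)
      (by
        rintro i _ ⟨x, hx, rfl⟩ _ ⟨y, hy, rfl⟩ a b ha hb hab
        exact ⟨_, hconv i hx hy ha hb hab, lift_comb x y hab⟩)
      (fun i => (hne i).image _) hI (by simp)
    obtain ⟨u, α, rfl⟩ := exists_fnl w
    have ht' : ∀ i : Fin d, ({x | ⟪u, x⟫_ℝ = α} ∩ K i).Nonempty ∧ K i ⊆ {x | α ≤ ⟪u, x⟫_ℝ} := by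
      intro i
      obtain ⟨⟨_, ⟨x, hx, rfl⟩, h0⟩, h1⟩ := ht i
      rw [fnl_lift] at h0
      refine ⟨⟨x, sub_eq_zero.1 h0, hx⟩, fun y hy => ?_⟩
      have := h1 _ ⟨y, hy, rfl⟩
      rw [fnl_lift] at this
      exact sub_nonneg.1 this
    refine ⟨u, α, ?_, hp, ht'⟩
    rintro rfl
    obtain ⟨x, hx, -⟩ := (ht' i₀).1
    apply hw
    have hα : α = 0 := by simpa using hx.symm
    subst hα
    ext i
    refine Fin.cases ?_ (fun i => ?_) i <;> simp [fnl]
  obtain ⟨u₁, α₁, hu₁, hp₁, ht₁⟩ := key 1 one_ne_zero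
  obtain ⟨u₂, α₂, hu₂, hp₂, ht₂⟩ := key (-1) (by norm_num)
  refine ⟨u₁, u₂, α₁, α₂, hu₁, hu₂, ?_, ht₁, ht₂⟩
  intro heq
  have hmem : ∀ x, ⟪u₁, x⟫_ℝ = α₁ ↔ ⟪u₂, x⟫_ℝ = α₂ := fun x => Set.ext_iff.1 heq x
  -- a point of the body off the hyperplane
  obtain ⟨y, hy, hyne⟩ : ∃ y ∈ K i₀, ⟪u₁, y⟫_ℝ ≠ α₁ := by
    by_contra hc
    push Not at hc
    obtain ⟨q, hq⟩ := hint i₀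
    have hcont : Continuous (fun t : ℝ => q + t • u₁) := by fun_prop
    have hev : ∀ᶠ t in nhds (0:ℝ), q + t • u₁ ∈ K i₀ := by
      apply hcont.continuousAt.eventually_mem
      simpa using mem_interior_iff_mem_nhds.1 hq
    obtain ⟨δ, hδ, hball⟩ := Metric.eventually_nhds_iff.1 hev
    have h1 := hc _ (hball (y := δ / 2) (by
      rw [Real.dist_eq, sub_zero, abs_of_pos (by linarith)]; linarith))
    have h2 := hc q (interior_subset hq)
    rw [inner_add_right, inner_smul_right, h2] at h1
    have h3 : 0 < ⟪u₁, u₁⟫_ℝ := real_inner_self_pos.2 hu₁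
    nlinarith
  choose x hx hxK using fun i => (ht₁ i).1
  have hl₁ : 0 < fnl u₁ α₁ (lift y) := by
    rw [fnl_lift, sub_pos]
    exact lt_of_le_of_ne ((ht₁ i₀).2 hy) (Ne.symm hyne)
  have hl₂ : 0 < fnl u₂ α₂ (lift y) := by
    rw [fnl_lift, sub_pos]
    exact lt_of_le_of_ne ((ht₂ i₀).2 hy) (Ne.symm fun h => hyne ((hmem y).2 h))
  have e₁ := hp₁ (fun i => lift (x i)) (fun i => ⟨_, hxK i, rfl⟩)
    (fun i => by rw [fnl_lift]; exact sub_eq_zero.2 (hx i)) _ hl₁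
  have e₂ := hp₂ (fun i => lift (x i)) (fun i => ⟨_, hxK i, rfl⟩)
    (fun i => by rw [fnl_lift]; exact sub_eq_zero.2 ((hmem _).1 (hx i))) _ hl₂
  linarith
end

section
/- Let C₁,…,C_d be a strongly separated family of compact sets in ℝ^d such that for each i the convex hull of Cᵢ has nonempty interior. Then the collection of affine hyperplanes of ℝ^d that are tangent to every Cᵢ (that is, sets H = {x : ⟨u,x⟩ = α} for some nonzero u and α, such that for every i, H ∩ Cᵢ ≠ ∅ and Cᵢ lies in one of the two closed half-spaces bounded by H) has exactly 2^d elements. -/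
open scoped InnerProductSpace

open Matrix in
/-- Orientation determinant of a hyperplane `w` and `d` points. -/
noncomputable def orientDet {d : ℕ} (x : Fin d → (Fin (d+1) → ℝ)) (w : Fin (d+1) → ℝ) : ℝ :=
  Matrix.det (Matrix.of (Fin.cons w x : Fin (d+1) → (Fin (d+1) → ℝ)))

/-- `w` is tangent to all `K i` on the side given by `σ`, positively oriented. -/
def TanAt {d : ℕ} (K : Fin d → Set (Fin (d+1) → ℝ)) (σ : Fin d → ℝ) (w : Fin (d+1) → ℝ) : Prop :=
  w ≠ 0 ∧ (∃ x : Fin d → (Fin (d+1) → ℝ), (∀ i, x i ∈ K i) ∧ (∀ i, w ⬝ᵥ x i = 0) ∧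
    0 < orientDet x w) ∧ ∀ i, ∀ z ∈ K i, 0 ≤ σ i * (w ⬝ᵥ z)

theorem orientDet_ne_zero {d : ℕ} {x : Fin d → (Fin (d+1) → ℝ)} {w : Fin (d+1) → ℝ}
    (hx : LinearIndependent ℝ x) (hw : w ≠ 0) (h : ∀ i, w ⬝ᵥ x i = 0) : orientDet x w ≠ 0 := by
  have hnot : w ∉ Submodule.span ℝ (Set.range x) := by
    intro hmem
    have : ∀ v ∈ Submodule.span ℝ (Set.range x), w ⬝ᵥ v = 0 := by
      intro v hv
      induction hv using Submodule.span_induction with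
      | mem v hv => obtain ⟨i, rfl⟩ := hv; exact h i
      | zero => simp
      | add a b _ _ ha hb => rw [dotProduct_add, ha, hb, add_zero]
      | smul c a _ ha => rw [dotProduct_smul, ha, smul_zero]
    exact hw (dotProduct_self_eq_zero.1 (this w hmem))
  have hli : LinearIndependent ℝ (Fin.cons w x : Fin (d+1) → (Fin (d+1) → ℝ)) :=
    linearIndependent_finCons.2 ⟨hx, hnot⟩
  have := (Matrix.linearIndependent_rows_iff_isUnit (A := Matrix.of (Fin.cons w x : Fin (d+1) → (Fin (d+1) → ℝ)))).1 hli
  rw [Matrix.isUnit_iff_isUnit_det] at this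
  exact this.ne_zero

theorem orientDet_smul {d : ℕ} (x : Fin d → (Fin (d+1) → ℝ)) (w : Fin (d+1) → ℝ) (c : ℝ) :
    orientDet x (c • w) = c * orientDet x w := by
  unfold orientDet
  have h := Matrix.det_updateRow_smul (Matrix.of (Fin.cons w x : Fin (d+1) → (Fin (d+1) → ℝ))) 0 c w
  have e : ∀ v, Matrix.updateRow (Matrix.of (Fin.cons w x : Fin (d+1) → (Fin (d+1) → ℝ))) 0 v
     = Matrix.of (Fin.cons v x : Fin (d+1) → (Fin (d+1) → ℝ)) := by
    intro v
    ext i j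
    refine Fin.cases ?_ (fun i => ?_) i <;> simp [Matrix.updateRow_apply]
  rwa [e, e] at h

/-- Two vectors which are both orthogonal to the independent `x` are proportional. -/
theorem prop_of_orth {d : ℕ} {x : Fin d → (Fin (d+1) → ℝ)} {w w' : Fin (d+1) → ℝ}
    (hx : LinearIndependent ℝ x) (hw : w ≠ 0) (h : ∀ i, w ⬝ᵥ x i = 0) (h' : ∀ i, w' ⬝ᵥ x i = 0) :
    ∃ c : ℝ, w' = c • w := by
  have hww : w ⬝ᵥ w ≠ 0 := fun h0 => hw (dotProduct_self_eq_zero.1 h0)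
  refine ⟨(w ⬝ᵥ w') / (w ⬝ᵥ w), ?_⟩
  set c := (w ⬝ᵥ w') / (w ⬝ᵥ w) with hc
  have hD := orientDet_ne_zero hx hw h
  have := Matrix.eq_zero_of_mulVec_eq_zero hD (v := w' - c • w) (by
    ext i
    refine Fin.cases ?_ (fun i => ?_) i
    · simp only [Matrix.mulVec, Matrix.of_apply, Fin.cons_zero, Pi.zero_apply]
      rw [dotProduct_sub, dotProduct_smul, smul_eq_mul, hc]
      field_simp
      ring
    · simp only [Matrix.mulVec, Matrix.of_apply, Fin.cons_succ, Pi.zero_apply]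
      rw [dotProduct_sub, dotProduct_smul, dotProduct_comm, h', dotProduct_comm, h]
      simp)
  exact sub_eq_zero.1 this

theorem orient_path {d : ℕ} {K : Fin d → Set (Fin (d+1) → ℝ)}
    (hLI : ∀ x : Fin d → (Fin (d+1) → ℝ), (∀ i, x i ∈ K i) → LinearIndependent ℝ x)
    (y : Fin d → ℝ → (Fin (d+1) → ℝ)) (w : ℝ → (Fin (d+1) → ℝ))
    (hy : ∀ i, ContinuousOn (y i) (Set.Icc 0 1)) (hw : ContinuousOn w (Set.Icc 0 1))
    (hyK : ∀ i, ∀ t ∈ Set.Icc (0:ℝ) 1, y i t ∈ K i) (hw0 : ∀ t ∈ Set.Icc (0:ℝ) 1, w t ≠ 0)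
    (hwy : ∀ i, ∀ t ∈ Set.Icc (0:ℝ) 1, w t ⬝ᵥ y i t = 0)
    (h0 : 0 < orientDet (fun i => y i 0) (w 0)) : 0 < orientDet (fun i => y i 1) (w 1) := by
  have hcont : ContinuousOn (fun t => orientDet (fun i => y i t) (w t)) (Set.Icc 0 1) := by
    unfold orientDet
    have : ContinuousOn (fun t => Matrix.of (Fin.cons (w t) (fun i => y i t) : Fin (d+1) → (Fin (d+1) → ℝ))) (Set.Icc 0 1) := by
      apply continuousOn_pi.2
      intro i
      refine Fin.cases ?_ (fun i => ?_) i
      · exact hw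
      · exact hy i
    exact (Continuous.matrix_det continuous_id).comp_continuousOn this
  have hne : ∀ t ∈ Set.Icc (0:ℝ) 1, orientDet (fun i => y i t) (w t) ≠ 0 := fun t ht =>
    orientDet_ne_zero (hLI _ (fun i => hyK i t ht)) (hw0 t ht) (fun i => hwy i t ht)
  by_contra hcon
  push Not at hcon
  obtain ⟨t, ht, h⟩ := intermediate_value_Icc' (zero_le_one (α := ℝ)) hcont ⟨hcon, h0.le⟩
  exact hne t ht h

theorem orient_indep {d : ℕ} {K : Fin d → Set (Fin (d+1) → ℝ)}
    (hconv : ∀ i, Convex ℝ (K i))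
    (hLI : ∀ x : Fin d → (Fin (d+1) → ℝ), (∀ i, x i ∈ K i) → LinearIndependent ℝ x)
    {w : Fin (d+1) → ℝ} (hw : w ≠ 0) {x y : Fin d → (Fin (d+1) → ℝ)}
    (hx : ∀ i, x i ∈ K i) (hy : ∀ i, y i ∈ K i) (hwx : ∀ i, w ⬝ᵥ x i = 0)
    (hwy : ∀ i, w ⬝ᵥ y i = 0) (h : 0 < orientDet x w) : 0 < orientDet y w := by
  have := orient_path hLI (fun i t => (1 - t) • x i + t • y i) (fun _ => w)
    (fun i => by fun_prop) (by fun_prop)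
    (fun i t ht => hconv i (hx i) (hy i) (by linarith [ht.2]) ht.1 (by ring)) (fun _ _ => hw)
    (fun i t ht => by simp [dotProduct_add, hwx, hwy]) (by simpa using h)
  simpa using this

theorem tan_path_pt {n : ℕ} {K : Set (Fin n → ℝ)} (hconv : Convex ℝ K) {s : ℝ} (hs : s ≠ 0)
    {w w' x x' : Fin n → ℝ} (hx : x ∈ K) (hx' : x' ∈ K) (hwx : w ⬝ᵥ x = 0) (hwx' : w' ⬝ᵥ x' = 0)
    (ha : 0 ≤ s * (w ⬝ᵥ x')) (hb : 0 ≤ s * (w' ⬝ᵥ x)) :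
    ∃ y : ℝ → (Fin n → ℝ), ContinuousOn y (Set.Icc 0 1) ∧ (∀ t ∈ Set.Icc (0:ℝ) 1, y t ∈ K) ∧
      ∀ t ∈ Set.Icc (0:ℝ) 1, ((1 - t) • w - t • w') ⬝ᵥ y t = 0 := by
  rcases ha.eq_or_lt with ha | ha
  · have : w ⬝ᵥ x' = 0 := by simpa [hs] using ha.symm
    exact ⟨fun _ => x', by fun_prop, fun _ _ => hx', fun t _ => by
      simp [sub_dotProduct, this, hwx']⟩
  rcases hb.eq_or_lt with hb | hb
  · have : w' ⬝ᵥ x = 0 := by simpa [hs] using hb.symm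
    exact ⟨fun _ => x, by fun_prop, fun _ _ => hx, fun t _ => by
      simp [sub_dotProduct, this, hwx]⟩
  set a := s * (w ⬝ᵥ x') with haa
  set b := s * (w' ⬝ᵥ x) with hbb
  have hden : ∀ t ∈ Set.Icc (0:ℝ) 1, 0 < (1 - t) * a + t * b := by
    intro t ht
    rcases ht.1.eq_or_lt with h | h
    · subst h; simpa using ha
    · have : 0 ≤ (1 - t) * a := mul_nonneg (by linarith [ht.2]) ha.le
      have := mul_pos h hb
      linarith
  refine ⟨fun t => ((1 - t) * a / ((1 - t) * a + t * b)) • x + (t * b / ((1 - t) * a + t * b)) • x', ?_, ?_, ?_⟩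
  · have : ∀ t ∈ Set.Icc (0:ℝ) 1, (1 - t) * a + t * b ≠ 0 := fun t ht => (hden t ht).ne'
    apply ContinuousOn.add
    · exact ContinuousOn.smul (ContinuousOn.div (by fun_prop) (by fun_prop) this) (by fun_prop)
    · exact ContinuousOn.smul (ContinuousOn.div (by fun_prop) (by fun_prop) this) (by fun_prop)
  · intro t ht
    have h := hden t ht
    refine hconv hx hx' (div_nonneg (mul_nonneg (by linarith [ht.2]) ha.le) h.le)
      (div_nonneg (mul_nonneg ht.1 hb.le) h.le) ?_
    field_simp
  · intro t ht
    have h := hden t ht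
    simp only [sub_dotProduct, dotProduct_add, smul_dotProduct, dotProduct_smul, smul_eq_mul, hwx, hwx']
    have e1 : w ⬝ᵥ x' = a / s := by rw [haa]; field_simp
    have e2 : w' ⬝ᵥ x = b / s := by rw [hbb]; field_simp
    rw [e1, e2]
    field_simp
    ring

theorem tan_unique {d : ℕ} {K : Fin d → Set (Fin (d+1) → ℝ)} (hconv : ∀ i, Convex ℝ (K i))
    (hLI : ∀ x : Fin d → (Fin (d+1) → ℝ), (∀ i, x i ∈ K i) → LinearIndependent ℝ x)
    {σ : Fin d → ℝ} (hσ : ∀ i, σ i ≠ 0) {w w' : Fin (d+1) → ℝ} (h : TanAt K σ w)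
    (h' : TanAt K σ w') : ∃ c : ℝ, 0 < c ∧ w' = c • w := by
  obtain ⟨hw, ⟨x, hx, hwx, hD⟩, hs⟩ := h
  obtain ⟨hw', ⟨x', hx', hwx', hD'⟩, hs'⟩ := h'
  by_contra hcon
  have hne : ∀ t ∈ Set.Icc (0:ℝ) 1, (1 - t) • w - t • w' ≠ 0 := by
    intro t ht h0
    have h0 := sub_eq_zero.1 h0
    rcases ht.1.eq_or_lt with h | h
    · subst h; simp at h0; exact hw h0
    rcases ht.2.eq_or_lt with h1 | h1
    · subst h1; simp at h0; exact hw' h0.symm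
    refine hcon ⟨(1 - t) / t, div_pos (by linarith) h, ?_⟩
    rw [div_eq_inv_mul, mul_smul, h0, smul_smul, inv_mul_cancel₀ h.ne', one_smul]
  choose y hyc hyK hyw using fun i => tan_path_pt (hconv i) (hσ i) (hx i) (hx' i) (hwx i) (hwx' i)
    (hs i _ (hx' i)) (hs' i _ (hx i))
  have m0 : (0:ℝ) ∈ Set.Icc (0:ℝ) 1 := by simp
  have m1 : (1:ℝ) ∈ Set.Icc (0:ℝ) 1 := by simp
  have k := orient_path hLI y (fun t => (1 - t) • w - t • w') hyc (by fun_prop) hyK hne hyw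
    (by
      have := orient_indep hconv hLI hw hx (fun i => hyK i 0 m0) hwx
        (fun i => by simpa using hyw i 0 m0) hD
      simpa using this)
  have k2 := orient_indep hconv hLI hw' hx' (fun i => hyK i 1 m1) hwx'
        (fun i => by simpa using hyw i 1 m1) hD'
  have e : (1 - (1:ℝ)) • w - (1:ℝ) • w' = (-1 : ℝ) • w' := by simp
  simp only [e] at k
  rw [orientDet_smul] at k
  linarith

theorem exists_tan_points {d : ℕ} {x : Fin d → (Fin (d+1) → ℝ)} (hx : LinearIndependent ℝ x) :
    ∃ w : Fin (d+1) → ℝ, w ≠ 0 ∧ (∀ i, w ⬝ᵥ x i = 0) ∧ 0 < orientDet x w := by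
  have hex : ∃ w : Fin (d+1) → ℝ, w ≠ 0 ∧ (∀ i, w ⬝ᵥ x i = 0) := by
    have hni : ¬ Function.Injective (Matrix.mulVecLin (Matrix.of x)) := by
      intro hinj
      have := LinearMap.finrank_le_finrank_of_injective hinj
      simp at this
    rw [← LinearMap.ker_eq_bot, Submodule.eq_bot_iff] at hni
    push Not at hni
    obtain ⟨w, hw, hw0⟩ := hni
    refine ⟨w, hw0, fun i => ?_⟩
    have := congrFun (LinearMap.mem_ker.1 hw) i
    rw [dotProduct_comm]
    simpa [Matrix.mulVec] using this
  obtain ⟨w, hw, hwx⟩ := hex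
  rcases lt_or_gt_of_ne (orientDet_ne_zero hx hw hwx) with h | h
  · refine ⟨(-1 : ℝ) • w, by simpa using hw, fun i => by simp [hwx], ?_⟩
    rw [orientDet_smul]
    linarith
  · exact ⟨w, hw, hwx, h⟩

/-- Selection step: a family of affine functionals indexed by the points of a compact convex set. -/
theorem exists_support {n : ℕ} {K : Set (Fin n → ℝ)} (hconv : Convex ℝ K) (hcomp : IsCompact K)
    (hne : K.Nonempty) (f : (Fin n → ℝ) → (Fin n → ℝ)) (hf : ∀ y ∈ K, f y ⬝ᵥ y = 0)
    (hA : ∀ y ∈ K, ∀ y' ∈ K, 0 ≤ f y ⬝ᵥ y' → 0 ≤ f y' ⬝ᵥ y → ∃ c : ℝ, 0 < c ∧ f y' = c • f y)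
    (hB : ∀ y ∈ K, ∀ y' ∈ K, f y ⬝ᵥ y' ≤ 0 → f y' ⬝ᵥ y ≤ 0 → ∃ c : ℝ, 0 < c ∧ f y' = c • f y) :
    ∃ y ∈ K, ∀ z ∈ K, 0 ≤ f y ⬝ᵥ z := by
  have key : ∀ y₁ ∈ K, ∀ y₂ ∈ K, 0 < f y₁ ⬝ᵥ y₂ → f y₂ ⬝ᵥ y₁ < 0 → ∀ z ∈ K, f y₁ ⬝ᵥ z ≤ 0 →
      f y₂ ⬝ᵥ z ≤ 0 := by
    intro y₁ h₁ y₂ h₂ h12 h21 z hz hz1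
    by_contra hz2
    push Not at hz2
    set a := f y₁ ⬝ᵥ y₂ with ha
    set b := - (f y₁ ⬝ᵥ z) with hb
    have hb0 : 0 ≤ b := by linarith
    have hab : 0 < a + b := by linarith
    set p := (b / (a + b)) • y₂ + (a / (a + b)) • z with hp
    have hpK : p ∈ K := hconv h₂ hz (by positivity) (by positivity) (by field_simp; ring)
    have hp1 : f y₁ ⬝ᵥ p = 0 := by
      rw [hp, dotProduct_add, dotProduct_smul, dotProduct_smul, ← ha, smul_eq_mul, smul_eq_mul,
        show f y₁ ⬝ᵥ z = -b by rw [hb]; ring]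
      field_simp
      ring
    have hp2 : 0 ≤ f y₂ ⬝ᵥ p := by
      rw [hp, dotProduct_add, dotProduct_smul, dotProduct_smul, hf y₂ h₂, smul_eq_mul, smul_eq_mul]
      have : 0 ≤ a / (a + b) * f y₂ ⬝ᵥ z := by positivity
      simpa using this
    obtain ⟨c, hc, hcp⟩ : ∃ c : ℝ, 0 < c ∧ f p = c • f y₁ := by
      rcases le_total 0 (f p ⬝ᵥ y₁) with h | h
      · exact hA y₁ h₁ p hpK hp1.ge h
      · exact hB y₁ h₁ p hpK hp1.le h
    have hpy2 : 0 < f p ⬝ᵥ y₂ := by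
      rw [hcp, smul_dotProduct]
      exact mul_pos hc h12
    obtain ⟨c', hc', hcp'⟩ := hA p hpK y₂ h₂ hpy2.le hp2
    rw [hcp', hcp, smul_smul, smul_dotProduct, hf y₁ h₁] at h21
    simp at h21
  have hdich : ∀ y₁ ∈ K, ∀ y₂ ∈ K, (∀ z ∈ K, f y₁ ⬝ᵥ z ≤ 0 → f y₂ ⬝ᵥ z ≤ 0) ∨
      (∀ z ∈ K, f y₂ ⬝ᵥ z ≤ 0 → f y₁ ⬝ᵥ z ≤ 0) := by
    intro y₁ h₁ y₂ h₂
    have hprop : (∃ c : ℝ, 0 < c ∧ f y₂ = c • f y₁) → (∀ z ∈ K, f y₁ ⬝ᵥ z ≤ 0 → f y₂ ⬝ᵥ z ≤ 0) := by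
      rintro ⟨c, hc, h⟩ z _ hz
      rw [h, smul_dotProduct, smul_eq_mul]
      exact mul_nonpos_of_nonneg_of_nonpos hc.le hz
    rcases lt_or_ge 0 (f y₁ ⬝ᵥ y₂) with h12 | h12
    · rcases lt_or_ge (f y₂ ⬝ᵥ y₁) 0 with h21 | h21
      · exact Or.inl (key y₁ h₁ y₂ h₂ h12 h21)
      · exact Or.inl (hprop (hA y₁ h₁ y₂ h₂ h12.le h21))
    · rcases le_or_gt (f y₂ ⬝ᵥ y₁) 0 with h21 | h21
      · exact Or.inl (hprop (hB y₁ h₁ y₂ h₂ h12 h21))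
      · rcases h12.eq_or_lt with h12 | h12
        · exact Or.inl (hprop (hA y₁ h₁ y₂ h₂ h12.ge h21.le))
        · exact Or.inr (key y₂ h₂ y₁ h₁ h21 h12)
  have : Nonempty K := hne.to_subtype
  have hcl : ∀ y : K, IsClosed {z : Fin n → ℝ | f y ⬝ᵥ z ≤ 0} := fun y =>
    isClosed_le (by unfold dotProduct; fun_prop) continuous_const
  obtain ⟨y₀, hy₀⟩ := IsCompact.nonempty_iInter_of_directed_nonempty_isCompact_isClosed
    (fun y : K => K ∩ {z | f y ⬝ᵥ z ≤ 0})
    (by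
      intro y₁ y₂
      rcases hdich y₁ y₁.2 y₂ y₂.2 with h | h
      · exact ⟨y₁, subset_rfl, fun z hz => ⟨hz.1, h z hz.1 hz.2⟩⟩
      · exact ⟨y₂, fun z hz => ⟨hz.1, h z hz.1 hz.2⟩, subset_rfl⟩)
    (fun y => ⟨y, y.2, (hf y y.2).le⟩)
    (fun y => hcomp.inter_right (hcl y))
    (fun y => hcomp.isClosed.inter (hcl y))
  rw [Set.mem_iInter] at hy₀
  have hK : y₀ ∈ K := (hy₀ (Classical.arbitrary K)).1
  refine ⟨y₀, hK, fun z hz => ?_⟩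
  by_contra hneg
  push Not at hneg
  obtain ⟨c, hc, h⟩ := hB z hz y₀ hK (hy₀ ⟨z, hz⟩).2 hneg.le
  rw [h, smul_dotProduct, hf z hz] at hneg
  simp at hneg

theorem exists_tan_aux {d : ℕ} (s : Finset (Fin d)) : ∀ (K : Fin d → Set (Fin (d+1) → ℝ))
    (_ : ∀ i, Convex ℝ (K i)) (_ : ∀ i, IsCompact (K i)) (_ : ∀ i, (K i).Nonempty)
    (_ : ∀ x : Fin d → (Fin (d+1) → ℝ), (∀ i, x i ∈ K i) → LinearIndependent ℝ x)
    (_ : ∀ i, i ∉ s → (K i).Subsingleton)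
    (σ : Fin d → ℝ) (_ : ∀ i, σ i = 1 ∨ σ i = -1), ∃ w, TanAt K σ w := by
  induction s using Finset.induction_on with
  | empty =>
    intro K hconv hcomp hne hLI hsub σ hσ
    choose x hx using hne
    obtain ⟨w, hw, hwx, hD⟩ := exists_tan_points (hLI x hx)
    refine ⟨w, hw, ⟨x, hx, hwx, hD⟩, fun i z hz => ?_⟩
    rw [hsub i (by simp) hz (hx i), hwx i, mul_zero]
  | insert k s hk ih =>
    intro K hconv hcomp hne hLI hsub σ hσ
    have hupd : ∀ (A : Set (Fin (d+1) → ℝ)), A ⊆ K k →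
        ∀ i, Function.update K k A i ⊆ K i := by
      intro A hA i
      by_cases h : i = k
      · subst h; simpa using hA
      · simp [Function.update_of_ne h]
    have hw : ∀ y, ∃ w, y ∈ K k → TanAt (Function.update K k {y}) σ w := by
      intro y
      by_cases hy : y ∈ K k
      · have hsubs := hupd {y} (by simpa using hy)
        obtain ⟨w, hw⟩ := ih (Function.update K k {y})
          (fun i => by
            by_cases h : i = k
            · subst h; simp
            · simpa [Function.update_of_ne h] using hconv i)
          (fun i => by
            by_cases h : i = k
            · subst h; simp
            · simpa [Function.update_of_ne h] using hcomp i)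
          (fun i => by
            by_cases h : i = k
            · subst h; simp
            · simpa [Function.update_of_ne h] using hne i)
          (fun x hx => hLI x (fun i => hsubs i (hx i)))
          (fun i hi => by
            by_cases h : i = k
            · subst h; simp
            · simpa [Function.update_of_ne h] using hsub i (by simp [h, hi]))
          σ hσ
        exact ⟨w, fun _ => hw⟩
      · exact ⟨0, fun h => absurd h hy⟩
    choose w hw using hw
    have hw0 : ∀ y ∈ K k, w y ⬝ᵥ y = 0 := by
      intro y hy
      obtain ⟨-, ⟨x, hx, hwx, -⟩, -⟩ := hw y hy
      have h1 := hx k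
      simp at h1
      rw [← h1]
      simpa [h1] using hwx k
    have hlift : ∀ (A : Set (Fin (d+1) → ℝ)) (τ : ℝ), ∀ y ∈ K k, y ∈ A →
        (∀ z ∈ A, 0 ≤ τ * (w y ⬝ᵥ z)) →
        TanAt (Function.update K k A) (Function.update σ k τ) (w y) := by
      intro A τ y hy hyA hz
      obtain ⟨h0, ⟨x, hx, hwx, hD⟩, hs⟩ := hw y hy
      refine ⟨h0, ⟨x, fun i => ?_, hwx, hD⟩, fun i z hzi => ?_⟩
      · by_cases h : i = k
        · subst h
          have := hx i
          simp at this
          simpa [this] using hyA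
        · simpa [Function.update_of_ne h] using hx i
      · by_cases h : i = k
        · subst h
          simp at hzi ⊢
          exact hz z hzi
        · have := hs i z
          simp only [Function.update_of_ne h] at this hzi ⊢
          exact this hzi
    have huniq : ∀ τ : ℝ, τ ≠ 0 → ∀ y ∈ K k, ∀ y' ∈ K k, 0 ≤ τ * (w y ⬝ᵥ y') →
        0 ≤ τ * (w y' ⬝ᵥ y) → ∃ c : ℝ, 0 < c ∧ w y' = c • w y := by
      intro τ hτ y hy y' hy' h1 h2
      have hsubs := hupd (segment ℝ y y') ((hconv k).segment_subset hy hy')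
      refine tan_unique (K := Function.update K k (segment ℝ y y'))
        (σ := Function.update σ k τ) (fun i => ?_)
        (fun x hx => hLI x (fun i => hsubs i (hx i))) (fun i => ?_)
        (hlift _ _ y hy (left_mem_segment ℝ y y') ?_)
        (hlift _ _ y' hy' (right_mem_segment ℝ y y') ?_)
      · by_cases h : i = k
        · subst h; simpa using convex_segment y y'
        · simpa [Function.update_of_ne h] using hconv i
      · by_cases h : i = k
        · subst h; simpa using hτ
        · rcases hσ i with h' | h' <;> simp [Function.update_of_ne h, h']
      · rintro z ⟨a, b, ha, hb, hab, rfl⟩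
        rw [dotProduct_add, dotProduct_smul, dotProduct_smul, hw0 y hy]
        simp only [smul_eq_mul, mul_zero, zero_add]
        nlinarith [mul_nonneg hb h1]
      · rintro z ⟨a, b, ha, hb, hab, rfl⟩
        rw [dotProduct_add, dotProduct_smul, dotProduct_smul, hw0 y' hy']
        simp only [smul_eq_mul, mul_zero, add_zero]
        nlinarith [mul_nonneg ha h2]
    have hσk : σ k ≠ 0 := by rcases hσ k with h | h <;> simp [h]
    have hsm : ∀ {y y'}, (∃ c : ℝ, 0 < c ∧ w y' = c • w y) →
        ∃ c : ℝ, 0 < c ∧ σ k • w y' = c • σ k • w y := by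
      rintro y y' ⟨c, hc, h⟩
      exact ⟨c, hc, by rw [h, smul_comm]⟩
    obtain ⟨y₀, hy₀, hsupp⟩ := exists_support (hconv k) (hcomp k) (hne k) (fun y => σ k • w y)
      (fun y hy => by simp [hw0 y hy])
      (fun y hy y' hy' h1 h2 => by
        simp only [smul_dotProduct, smul_eq_mul] at h1 h2
        exact hsm (huniq (σ k) hσk y hy y' hy' h1 h2))
      (fun y hy y' hy' h1 h2 => by
        simp only [smul_dotProduct, smul_eq_mul] at h1 h2
        exact hsm (huniq (-σ k) (neg_ne_zero.2 hσk) y hy y' hy' (by linarith) (by linarith)))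
    refine ⟨w y₀, ?_⟩
    have := hlift (K k) (σ k) y₀ hy₀ hy₀ (fun z hz => by simpa using hsupp z hz)
    simpa using this

theorem exists_tan {d : ℕ} {K : Fin d → Set (Fin (d+1) → ℝ)}
    (hconv : ∀ i, Convex ℝ (K i)) (hcomp : ∀ i, IsCompact (K i)) (hne : ∀ i, (K i).Nonempty)
    (hLI : ∀ x : Fin d → (Fin (d+1) → ℝ), (∀ i, x i ∈ K i) → LinearIndependent ℝ x)
    {σ : Fin d → ℝ} (hσ : ∀ i, σ i = 1 ∨ σ i = -1) : ∃ w, TanAt K σ w :=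
  exists_tan_aux Finset.univ K hconv hcomp hne hLI (fun i hi => absurd (Finset.mem_univ i) hi) σ hσ

theorem isCompact_hull {d : ℕ} {S : Set (EuclideanSpace ℝ (Fin d))} (hS : IsCompact S) :
    IsCompact (convexHull ℝ S) := by
  let F : (k : ℕ) → (Fin k → ℝ) × (Fin k → EuclideanSpace ℝ (Fin d)) → EuclideanSpace ℝ (Fin d) :=
    fun k p => ∑ i, p.1 i • p.2 i
  have hF : ∀ k, Continuous (F k) := fun k => by
    simp only [F]
    fun_prop
  have heq : convexHull ℝ S =
      ⋃ k ∈ Finset.range (d + 2), F k '' (stdSimplex ℝ (Fin k) ×ˢ Set.univ.pi (fun _ => S)) := by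
    apply Set.Subset.antisymm
    · intro x hx
      obtain ⟨ι, _, z, w, hz, hai, hw, hw1, hwx⟩ := eq_pos_convex_span_of_mem_convexHull hx
      have hcard : Fintype.card ι ≤ d + 1 := by
        have := hai.card_le_finrank_succ
        refine this.trans (Nat.succ_le_succ ?_)
        refine (Submodule.finrank_le _).trans ?_
        simp
      let e := Fintype.equivFin ι
      simp only [Set.mem_iUnion]
      refine ⟨Fintype.card ι, by simp; omega, (w ∘ e.symm, z ∘ e.symm), ⟨⟨fun i => (hw _).le, ?_⟩, ?_⟩, ?_⟩
      · exact (Equiv.sum_comp e.symm w).trans hw1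
      · intro i _
        exact hz ⟨_, rfl⟩
      · exact (Equiv.sum_comp e.symm (fun i => w i • z i)).trans hwx
    · intro x hx
      simp only [Set.mem_iUnion] at hx
      obtain ⟨k, -, ⟨w, z⟩, ⟨⟨hw0, hw1⟩, hz⟩, rfl⟩ := hx
      exact (convex_convexHull ℝ S).sum_mem (fun i _ => hw0 i) hw1
        (fun i _ => subset_convexHull ℝ S (hz i (Set.mem_univ i)))
  rw [heq]
  exact Finset.isCompact_biUnion _ (fun k _ =>
    ((isCompact_stdSimplex ℝ (Fin k)).prod (isCompact_univ_pi (fun _ => hS))).image (hF k))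

/-- Lift of a point to homogeneous coordinates. -/
noncomputable def liftPt {d : ℕ} (x : EuclideanSpace ℝ (Fin d)) : Fin (d+1) → ℝ :=
  Fin.cons 1 (fun i => x i)

/-- Homogeneous coordinates of a hyperplane. -/
noncomputable def liftHyp {d : ℕ} (u : EuclideanSpace ℝ (Fin d)) (α : ℝ) : Fin (d+1) → ℝ :=
  Fin.cons (-α) (fun i => u i)

theorem liftHyp_dot {d : ℕ} (u x : EuclideanSpace ℝ (Fin d)) (α : ℝ) :
    liftHyp u α ⬝ᵥ liftPt x = ⟪u, x⟫_ℝ - α := by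
  simp only [liftHyp, liftPt, dotProduct, Fin.sum_univ_succ, Fin.cons_zero, Fin.cons_succ,
    PiLp.inner_apply, RCLike.inner_apply, conj_trivial]
  rw [Finset.sum_congr rfl (fun i _ => mul_comm _ _)]
  ring

theorem exists_liftHyp {d : ℕ} (w : Fin (d+1) → ℝ) :
    ∃ (u : EuclideanSpace ℝ (Fin d)) (α : ℝ), w = liftHyp u α := by
  refine ⟨WithLp.toLp 2 (fun i => w i.succ), - w 0, ?_⟩
  ext i
  refine Fin.cases ?_ (fun i => ?_) i <;> simp [liftHyp]

theorem liftHyp_zero {d : ℕ} : liftHyp (0 : EuclideanSpace ℝ (Fin d)) 0 = 0 := by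
  ext i
  refine Fin.cases ?_ (fun i => ?_) i <;> simp [liftHyp]

theorem liftHyp_ne_zero {d : ℕ} {u : EuclideanSpace ℝ (Fin d)} (hu : u ≠ 0) (α : ℝ) :
    liftHyp u α ≠ 0 := by
  intro h
  apply hu
  ext i
  have := congrFun h i.succ
  simpa [liftHyp] using this

theorem continuous_liftPt {d : ℕ} : Continuous (liftPt (d := d)) := by
  apply continuous_pi
  intro i
  refine Fin.cases ?_ (fun i => ?_) i
  · simp only [liftPt, Fin.cons_zero]; exact continuous_const
  · simp only [liftPt, Fin.cons_succ]; fun_prop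

theorem liftPt_comb {d : ℕ} (x y : EuclideanSpace ℝ (Fin d)) {a b : ℝ} (hab : a + b = 1) :
    liftPt (a • x + b • y) = a • liftPt x + b • liftPt y := by
  ext i
  refine Fin.cases ?_ (fun i => ?_) i <;> simp [liftPt, hab]

theorem convex_liftPt {d : ℕ} {S : Set (EuclideanSpace ℝ (Fin d))} (hS : Convex ℝ S) :
    Convex ℝ (liftPt '' S) := by
  rintro _ ⟨x, hx, rfl⟩ _ ⟨y, hy, rfl⟩ a b ha hb hab
  exact ⟨a • x + b • y, hS hx hy ha hb hab, liftPt_comb x y hab⟩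

theorem linInd_of_sep {d : ℕ} {C : Fin d → Set (EuclideanSpace ℝ (Fin d))}
    (hsep : StronglySeparated C) (x : Fin d → (Fin (d+1) → ℝ))
    (hx : ∀ i, x i ∈ liftPt '' (convexHull ℝ (C i))) : LinearIndependent ℝ x := by
  rw [Fintype.linearIndependent_iff]
  intro c hc
  obtain ⟨u, α, -, hlt, hgt⟩ := hsep (Finset.univ.filter (fun i => 0 < c i))
  choose p hp hpx using hx
  have hsum : ∑ i, c i * (⟪u, p i⟫_ℝ - α) = 0 := by
    have := congrArg (fun v => liftHyp u α ⬝ᵥ v) hc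
    simp only [dotProduct_sum, dotProduct_smul, smul_eq_mul, dotProduct_zero] at this
    rw [← this]
    refine Finset.sum_congr rfl (fun i _ => ?_)
    rw [← hpx i, liftHyp_dot]
  have hcl : Convex ℝ {z : EuclideanSpace ℝ (Fin d) | ⟪u, z⟫_ℝ < α} :=
    convex_halfSpace_lt (innerₛₗ ℝ u).isLinear α
  have hcg : Convex ℝ {z : EuclideanSpace ℝ (Fin d) | α < ⟪u, z⟫_ℝ} :=
    convex_halfSpace_gt (innerₛₗ ℝ u).isLinear α
  have h1 : ∀ i, 0 < c i → ⟪u, p i⟫_ℝ < α := fun i hi =>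
    convexHull_min (fun z hz => hlt i (by simpa using hi) z hz) hcl (hp i)
  have h2 : ∀ i, ¬ 0 < c i → α < ⟪u, p i⟫_ℝ := fun i hi =>
    convexHull_min (fun z hz => hgt i (by simpa using hi) z hz) hcg (hp i)
  have hterm : ∀ i, c i * (⟪u, p i⟫_ℝ - α) ≤ 0 := by
    intro i
    by_cases hi : 0 < c i
    · exact mul_nonpos_of_nonneg_of_nonpos hi.le (by linarith [h1 i hi])
    · exact mul_nonpos_of_nonpos_of_nonneg (not_lt.1 hi) (by linarith [h2 i hi])
  intro i
  have := (Finset.sum_eq_zero_iff_of_nonpos (fun i _ => hterm i)).1 hsum i (Finset.mem_univ i)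
  rcases mul_eq_zero.1 this with h | h
  · exact h
  · by_cases hi : 0 < c i
    · linarith [h1 i hi]
    · linarith [h2 i hi]

/-- A halfspace condition passes to the convex hull. -/
theorem hull_side {d : ℕ} {S : Set (EuclideanSpace ℝ (Fin d))} {u : EuclideanSpace ℝ (Fin d)}
    {α s : ℝ} (h : ∀ x ∈ S, 0 ≤ s * (⟪u, x⟫_ℝ - α)) :
    ∀ x ∈ convexHull ℝ S, 0 ≤ s * (⟪u, x⟫_ℝ - α) := by
  have hc : Convex ℝ {z : EuclideanSpace ℝ (Fin d) | s * α ≤ ⟪s • u, z⟫_ℝ} :=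
    convex_halfSpace_ge (innerₛₗ ℝ (s • u)).isLinear (s * α)
  intro x hx
  have := convexHull_min (fun z hz => ?_) hc hx
  · simp only [Set.mem_ofPred_eq, real_inner_smul_left] at this
    linarith
  · have := h z hz
    simp only [Set.mem_ofPred_eq, real_inner_smul_left]
    linarith

theorem hull_side_pos {d : ℕ} {S : Set (EuclideanSpace ℝ (Fin d))} {u : EuclideanSpace ℝ (Fin d)}
    {α s : ℝ} (h : ∀ x ∈ S, 0 < s * (⟪u, x⟫_ℝ - α)) :
    ∀ x ∈ convexHull ℝ S, 0 < s * (⟪u, x⟫_ℝ - α) := by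
  have hc : Convex ℝ {z : EuclideanSpace ℝ (Fin d) | s * α < ⟪s • u, z⟫_ℝ} :=
    convex_halfSpace_gt (innerₛₗ ℝ (s • u)).isLinear (s * α)
  intro x hx
  have := convexHull_min (fun z hz => ?_) hc hx
  · simp only [Set.mem_ofPred_eq, real_inner_smul_left] at this
    linarith
  · have := h z hz
    simp only [Set.mem_ofPred_eq, real_inner_smul_left]
    linarith

theorem eq_zero_of_interior {d : ℕ} {S : Set (EuclideanSpace ℝ (Fin d))}
    (hS : (interior S).Nonempty) {u : EuclideanSpace ℝ (Fin d)} {α : ℝ}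
    (h : ∀ x ∈ S, ⟪u, x⟫_ℝ = α) : u = 0 := by
  obtain ⟨p, hp⟩ := hS
  have hc : Filter.Tendsto (fun t : ℝ => p + t • u) (nhdsWithin 0 (Set.Ioi 0)) (nhds p) := by
    have : Continuous (fun t : ℝ => p + t • u) := by fun_prop
    have h2 := this.tendsto 0
    simp only [zero_smul, add_zero] at h2
    exact h2.mono_left nhdsWithin_le_nhds
  have hev := (hc.eventually (isOpen_interior.mem_nhds hp)).and self_mem_nhdsWithin
  obtain ⟨t, ht, ht0⟩ := hev.exists
  have h1 := h _ (interior_subset ht)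
  have h2 := h _ (interior_subset hp)
  rw [inner_add_right, real_inner_smul_right, h2] at h1
  have h3 : t * ⟪u, u⟫_ℝ = 0 := by linarith
  rcases mul_eq_zero.1 h3 with h | h
  · exact absurd h (ne_of_gt ht0)
  · exact inner_self_eq_zero.1 h

theorem compact_sets_total_count {d : ℕ}
    (C : Fin d → Set (EuclideanSpace ℝ (Fin d)))
    (hcomp : ∀ i, IsCompact (C i))
    (hfull : ∀ i, (interior (convexHull ℝ (C i))).Nonempty)
    (hsep : StronglySeparated C) :
    {H : Set (EuclideanSpace ℝ (Fin d)) | ∃ (u : EuclideanSpace ℝ (Fin d)) (α : ℝ),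
        u ≠ 0 ∧ H = {x | ⟪u, x⟫_ℝ = α} ∧
        ∀ i : Fin d, (H ∩ C i).Nonempty ∧
          (C i ⊆ {x | α ≤ ⟪u, x⟫_ℝ} ∨ C i ⊆ {x | ⟪u, x⟫_ℝ ≤ α})}.encard = 2 ^ d := by
  have hd : Nonempty (Fin d) := by
    obtain ⟨u, α, hu, -, -⟩ := hsep ∅
    by_contra hcon
    rw [not_nonempty_iff] at hcon
    exact hu (Subsingleton.elim _ _)
  let K : Fin d → Set (Fin (d+1) → ℝ) := fun i => liftPt '' (convexHull ℝ (C i))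
  have hKconv : ∀ i, Convex ℝ (K i) := fun i => convex_liftPt (convex_convexHull ℝ _)
  have hKcomp : ∀ i, IsCompact (K i) := fun i => (isCompact_hull (hcomp i)).image continuous_liftPt
  have hKne : ∀ i, (K i).Nonempty := fun i => ((hfull i).mono interior_subset).image _
  have hLI : ∀ x : Fin d → (Fin (d+1) → ℝ), (∀ i, x i ∈ K i) → LinearIndependent ℝ x :=
    linInd_of_sep hsep
  let sg : (Fin d → Bool) → Fin d → ℝ := fun b i => if b i then 1 else -1
  have hsg : ∀ b i, sg b i = 1 ∨ sg b i = -1 := by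
    intro b i
    by_cases h : b i <;> simp [sg, h]
  have hsg0 : ∀ b i, sg b i ≠ 0 := by
    intro b i
    rcases hsg b i with h | h <;> simp [h]
  have hex : ∀ b, ∃ (u : EuclideanSpace ℝ (Fin d)) (α : ℝ), TanAt K (sg b) (liftHyp u α) := by
    intro b
    obtain ⟨w, hw⟩ := exists_tan hKconv hKcomp hKne hLI (hsg b)
    obtain ⟨u, α, rfl⟩ := exists_liftHyp w
    exact ⟨u, α, hw⟩
  choose u α hT using hex
  have hu : ∀ b, u b ≠ 0 := by
    intro b hb
    obtain ⟨h0, ⟨x, hx, hwx, -⟩, -⟩ := hT b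
    obtain ⟨p, -, hp⟩ := hx hd.some
    have := hwx hd.some
    rw [← hp, liftHyp_dot, hb, inner_zero_left] at this
    have ha : α b = 0 := by linarith
    rw [hb, ha, liftHyp_zero] at h0
    exact h0 rfl
  let Hf : (Fin d → Bool) → Set (EuclideanSpace ℝ (Fin d)) := fun b => {x | ⟪u b, x⟫_ℝ = α b}
  have hinj : Function.Injective Hf := by
    intro b b' hbb
    obtain ⟨h0, ⟨x, hx, hwx, hD⟩, hs⟩ := hT b
    obtain ⟨h0', ⟨x', hx', hwx', hD'⟩, hs'⟩ := hT b'
    have hwx2 : ∀ i, liftHyp (u b') (α b') ⬝ᵥ x i = 0 := by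
      intro i
      obtain ⟨p, -, hp⟩ := hx i
      have h1 := hwx i
      rw [← hp, liftHyp_dot] at h1 ⊢
      have h2 : p ∈ Hf b := by simp only [Hf, Set.mem_ofPred_eq]; linarith
      rw [hbb] at h2
      simp only [Hf, Set.mem_ofPred_eq] at h2
      linarith
    obtain ⟨c, hc⟩ := prop_of_orth (hLI x hx) h0 hwx hwx2
    have hD2 := orient_indep hKconv hLI h0' hx' hx hwx' hwx2 hD'
    rw [hc, orientDet_smul] at hD2
    have hc0 : 0 < c := pos_of_mul_pos_left hD2 hD.le
    funext i
    by_contra hne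
    apply hu b
    refine eq_zero_of_interior (hfull i) (α := α b) (fun z hz => ?_)
    have h1 := hs i _ ⟨z, hz, rfl⟩
    have h2 := hs' i _ ⟨z, hz, rfl⟩
    rw [hc, smul_dotProduct, smul_eq_mul] at h2
    rw [liftHyp_dot] at h1 h2
    have h3 : 0 ≤ sg b' i * (⟪u b, z⟫_ℝ - α b) := by
      have : 0 ≤ c * (sg b' i * (⟪u b, z⟫_ℝ - α b)) := by linarith
      exact nonneg_of_mul_nonneg_right this hc0
    have hcase : (sg b i = 1 ∧ sg b' i = -1) ∨ (sg b i = -1 ∧ sg b' i = 1) := by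
      cases hb : b i <;> cases hb' : b' i <;> simp_all [sg]
    rcases hcase with ⟨e1, e2⟩ | ⟨e1, e2⟩ <;> rw [e1] at h1 <;> rw [e2] at h3 <;> linarith
  have hset : {H : Set (EuclideanSpace ℝ (Fin d)) | ∃ (u : EuclideanSpace ℝ (Fin d)) (α : ℝ),
        u ≠ 0 ∧ H = {x | ⟪u, x⟫_ℝ = α} ∧
        ∀ i : Fin d, (H ∩ C i).Nonempty ∧
          (C i ⊆ {x | α ≤ ⟪u, x⟫_ℝ} ∨ C i ⊆ {x | ⟪u, x⟫_ℝ ≤ α})} = Set.range Hf := by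
    ext H
    constructor
    · rintro ⟨v, β, hv, rfl, hH⟩
      have hw0 := liftHyp_ne_zero hv β
      choose p hpH hpC using fun i => (hH i).1
      have hx : ∀ i, liftPt (p i) ∈ K i := fun i => ⟨p i, subset_convexHull ℝ _ (hpC i), rfl⟩
      have hwx : ∀ i, liftHyp v β ⬝ᵥ liftPt (p i) = 0 := by
        intro i
        rw [liftHyp_dot]
        have : ⟪v, p i⟫_ℝ = β := hpH i
        linarith
      have hside : ∀ e : ℝ, (e = 1 ∨ e = -1) → ∃ b : Fin d → Bool, ∀ i, ∀ z ∈ K i,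
          0 ≤ sg b i * ((e • liftHyp v β) ⬝ᵥ z) := by
        intro e he
        have : ∀ i, ∃ b : Bool, ∀ z ∈ K i,
            0 ≤ (if b then (1:ℝ) else -1) * ((e • liftHyp v β) ⬝ᵥ z) := by
          intro i
          have hs : ∃ s : ℝ, (s = 1 ∨ s = -1) ∧ ∀ z ∈ C i, 0 ≤ s * (⟪v, z⟫_ℝ - β) := by
            rcases (hH i).2 with h | h
            · exact ⟨1, Or.inl rfl, fun z hz => by
                have : β ≤ ⟪v, z⟫_ℝ := h hz
                linarith⟩
            · exact ⟨-1, Or.inr rfl, fun z hz => by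
                have : ⟪v, z⟫_ℝ ≤ β := h hz
                linarith⟩
          obtain ⟨s, hs, hsz⟩ := hs
          have hb : ∃ b : Bool, (if b then (1:ℝ) else -1) * e = s := by
            rcases hs with rfl | rfl <;> rcases he with rfl | rfl
            · exact ⟨true, by simp⟩
            · exact ⟨false, by simp⟩
            · exact ⟨false, by simp⟩
            · exact ⟨true, by simp⟩
          obtain ⟨b, hb⟩ := hb
          refine ⟨b, ?_⟩
          rintro _ ⟨z, hz, rfl⟩
          rw [smul_dotProduct, smul_eq_mul, ← mul_assoc, hb, liftHyp_dot]
          exact hull_side hsz z hz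
        choose b hb using this
        exact ⟨b, hb⟩
      have hor : ∃ e : ℝ, (e = 1 ∨ e = -1) ∧ 0 < orientDet (fun i => liftPt (p i)) (e • liftHyp v β) := by
        rcases lt_or_gt_of_ne (orientDet_ne_zero (hLI _ hx) hw0 hwx) with h | h
        · exact ⟨-1, Or.inr rfl, by rw [orientDet_smul]; linarith⟩
        · exact ⟨1, Or.inl rfl, by rw [orientDet_smul]; linarith⟩
      obtain ⟨e, he, heD⟩ := hor
      have he0 : e ≠ 0 := by rcases he with rfl | rfl <;> norm_num
      obtain ⟨b, hb⟩ := hside e he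
      have hTan : TanAt K (sg b) (e • liftHyp v β) :=
        ⟨smul_ne_zero he0 hw0, ⟨_, hx, fun i => by rw [smul_dotProduct, hwx, smul_zero], heD⟩, hb⟩
      obtain ⟨c, hc, hcw⟩ := tan_unique hKconv hLI (hsg0 b) hTan (hT b)
      refine ⟨b, ?_⟩
      ext z
      have h1 := congrArg (fun w => w ⬝ᵥ liftPt z) hcw
      simp only [smul_dotProduct, smul_eq_mul, liftHyp_dot] at h1
      simp only [Hf, Set.mem_ofPred_eq]
      rw [← sub_eq_zero, h1, ← sub_eq_zero (a := ⟪v, z⟫_ℝ)]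
      simp [hc.ne', he0]
    · rintro ⟨b, rfl⟩
      refine ⟨u b, α b, hu b, rfl, fun i => ?_⟩
      obtain ⟨h0, ⟨x, hx, hwx, hD⟩, hs⟩ := hT b
      have hs2 : ∀ z ∈ C i, 0 ≤ sg b i * (⟪u b, z⟫_ℝ - α b) := by
        intro z hz
        have := hs i _ ⟨z, subset_convexHull ℝ _ hz, rfl⟩
        rwa [liftHyp_dot] at this
      constructor
      · by_contra hcon
        rw [Set.not_nonempty_iff_eq_empty] at hcon
        have hpos : ∀ z ∈ C i, 0 < sg b i * (⟪u b, z⟫_ℝ - α b) := by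
          intro z hz
          refine lt_of_le_of_ne (hs2 z hz) (fun h => ?_)
          rcases mul_eq_zero.1 h.symm with h | h
          · exact hsg0 b i h
          · have : z ∈ Hf b ∩ C i := ⟨sub_eq_zero.1 h, hz⟩
            rw [hcon] at this
            exact this
        obtain ⟨p, hp, hpx⟩ := hx i
        have h1 := hull_side_pos hpos p hp
        have h2 := hwx i
        rw [← hpx, liftHyp_dot] at h2
        rw [h2, mul_zero] at h1
        exact lt_irrefl _ h1
      · rcases hsg b i with h | h
        · left
          intro z hz
          have := hs2 z hz
          rw [h] at this
          simp only [Set.mem_ofPred_eq]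
          linarith
        · right
          intro z hz
          have := hs2 z hz
          rw [h] at this
          simp only [Set.mem_ofPred_eq]
          linarith
  rw [hset, ← Set.image_univ, hinj.encard_image, Set.encard_univ]
  simp
end

section
/- Let C₁,…,C_d be a strongly separated family of nonempty compact sets in ℝ^d whose union is affinely spanning (the affine span of C₁ ∪ ⋯ ∪ C_d is all of ℝ^d), and let A ⊔ B = {1,…,d} be a partition. Then there exist exactly two pairs (u,α) with ‖u‖ = 1 such that for every i, the hyperplane H_{u,α} = {x : ⟨u,x⟩ = α} satisfies H_{u,α} ∩ Cᵢ ≠ ∅, and Cᵢ ⊆ {x : ⟨u,x⟩ ≥ α} if i ∈ A while Cᵢ ⊆ {x : ⟨u,x⟩ ≤ α} if i ∈ B. -/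
open scoped InnerProductSpace

namespace CSP
open Matrix Filter Topology

/-- Sign-pattern separation in homogenized form. -/
def Sep {n : ℕ} (K : Fin n → Set (Fin (n+1) → ℝ)) : Prop :=
  ∀ I : Set (Fin n), ∃ w : Fin (n+1) → ℝ, (∀ i ∈ I, ∀ x ∈ K i, 0 < w ⬝ᵥ x) ∧
    (∀ i, i ∉ I → ∀ x ∈ K i, w ⬝ᵥ x < 0)

/-- The orientation determinant. -/
noncomputable def ori {n : ℕ} (x : Fin n → Fin (n+1) → ℝ) (v : Fin (n+1) → ℝ) : ℝ :=
  (Matrix.of (Fin.cons v x : Fin (n+1) → Fin (n+1) → ℝ)).det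

lemma ori_smul {n : ℕ} (x : Fin n → Fin (n+1) → ℝ) (v : Fin (n+1) → ℝ) (c : ℝ) :
    ori x (c • v) = c * ori x v := by
  unfold ori
  have h : ∀ u : Fin (n+1) → ℝ, (Matrix.of (Fin.cons u x : Fin (n+1) → Fin (n+1) → ℝ)) =
      (Matrix.of (Fin.cons v x : Fin (n+1) → Fin (n+1) → ℝ)).updateRow 0 u := by
    intro u
    ext i j
    refine Fin.cases ?_ (fun i => ?_) i
    · simp
    · simp [Matrix.updateRow_apply]
  rw [h (c • v), Matrix.det_updateRow_smul, ← h v]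

lemma ori_neg {n : ℕ} (x : Fin n → Fin (n+1) → ℝ) (v : Fin (n+1) → ℝ) :
    ori x (-v) = - ori x v := by
  have := ori_smul x v (-1)
  simpa using this

lemma continuous_ori {n : ℕ} :
    Continuous fun p : (Fin n → Fin (n+1) → ℝ) × (Fin (n+1) → ℝ) => ori p.1 p.2 := by
  unfold ori
  apply Continuous.matrix_det
  refine continuous_matrix fun i j => ?_
  refine Fin.cases ?_ (fun i => ?_) i
  · simp only [Matrix.of_apply, Fin.cons_zero]; fun_prop
  · simp only [Matrix.of_apply, Fin.cons_succ]; fun_prop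

lemma ori_ne {n : ℕ} {K : Fin n → Set (Fin (n+1) → ℝ)} (hS : Sep K)
    {x : Fin n → Fin (n+1) → ℝ} (hx : ∀ i, x i ∈ K i) {v : Fin (n+1) → ℝ} (hv : v ≠ 0)
    (h0 : ∀ i, v ⬝ᵥ x i = 0) : ori x v ≠ 0 := by
  intro h
  obtain ⟨c, hc, hM⟩ := Matrix.exists_vecMul_eq_zero_iff.2 h
  have key : ∀ u : Fin (n+1) → ℝ, c 0 * (u ⬝ᵥ v) + ∑ i : Fin n, c i.succ * (u ⬝ᵥ x i) = 0 := by
    intro u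
    have h1 : (c ᵥ* (Matrix.of (Fin.cons v x : Fin (n+1) → Fin (n+1) → ℝ))) ⬝ᵥ u = 0 := by
      rw [hM]; simp
    rw [← Matrix.dotProduct_mulVec, dotProduct, Fin.sum_univ_succ] at h1
    simp only [Matrix.mulVec, Matrix.of_apply, Fin.cons_zero, Fin.cons_succ] at h1
    simpa only [dotProduct_comm u] using h1
  have hc0 : c 0 = 0 := by
    have := key v
    simp only [h0, mul_zero, Finset.sum_const_zero, add_zero] at this
    rcases mul_eq_zero.1 this with h | h
    · exact h
    · exact absurd (dotProduct_self_eq_zero.1 h) hv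
  obtain ⟨w, hw1, hw2⟩ := hS {i | 0 ≤ c i.succ}
  have hk := key w
  rw [hc0, zero_mul, zero_add] at hk
  have hnn : ∀ i ∈ Finset.univ, 0 ≤ c (Fin.succ i) * (w ⬝ᵥ x i) := by
    intro i _
    by_cases hi : 0 ≤ c i.succ
    · exact mul_nonneg hi (hw1 i hi _ (hx i)).le
    · exact mul_nonneg_of_nonpos_of_nonpos (not_le.1 hi).le (hw2 i hi _ (hx i)).le
  have hz := (Finset.sum_eq_zero_iff_of_nonneg hnn).1 hk
  apply hc
  ext j
  refine Fin.cases hc0 (fun i => ?_) j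
  rcases mul_eq_zero.1 (hz i (Finset.mem_univ _)) with h | h
  · exact h
  · by_cases hi : 0 ≤ c i.succ
    · exact absurd h (hw1 i hi _ (hx i)).ne'
    · exact absurd h (hw2 i hi _ (hx i)).ne

/-- Continuation principle on `[0,1]`. -/
lemma ivt_pos {g : ℝ → ℝ} (hg : ContinuousOn g (Set.Icc 0 1)) (hne : ∀ t ∈ Set.Icc (0:ℝ) 1, g t ≠ 0)
    (h0 : 0 < g 0) : 0 < g 1 := by
  by_contra h
  push Not at h
  obtain ⟨t, ht, h⟩ := intermediate_value_Icc' zero_le_one hg ⟨h, h0.le⟩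
  exact hne t ht h

lemma ori_pos_congr {n : ℕ} {K : Fin n → Set (Fin (n+1) → ℝ)} (hS : Sep K)
    (hconv : ∀ i, Convex ℝ (K i)) (s : ℝ)
    {x y : Fin n → Fin (n+1) → ℝ} (hx : ∀ i, x i ∈ K i) (hy : ∀ i, y i ∈ K i)
    {v : Fin (n+1) → ℝ} (hvx : ∀ i, v ⬝ᵥ x i = 0) (hvy : ∀ i, v ⬝ᵥ y i = 0)
    (h : 0 < s * ori x v) : 0 < s * ori y v := by
  have hs : s ≠ 0 := by rintro rfl; simp at h
  have hv : v ≠ 0 := by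
    rintro rfl
    have := ori_smul x (0 : Fin (n+1) → ℝ) 0
    simp at this; simp [this] at h
  let p : ℝ → Fin n → Fin (n+1) → ℝ := fun t i => (1 - t) • x i + t • y i
  have := ivt_pos (g := fun t => s * ori (p t) v) ?_ ?_ ?_
  · simpa [p] using this
  · refine Continuous.continuousOn (continuous_const.mul ?_)
    refine continuous_ori.comp (Continuous.prodMk ?_ continuous_const)
    fun_prop
  · intro t ht
    refine mul_ne_zero hs (ori_ne hS (fun i => ?_) hv fun i => ?_)
    · exact hconv i (hx i) (hy i) (by linarith [ht.2]) ht.1 (by ring)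
    · simp [p, dotProduct_add, dotProduct_smul, hvx, hvy]
  · simpa [p] using h

lemma unique_ray {n : ℕ} {K : Fin n → Set (Fin (n+1) → ℝ)} (hS : Sep K)
    (hconv : ∀ i, Convex ℝ (K i)) (s : ℝ)
    {x x' : Fin n → Fin (n+1) → ℝ} (hx : ∀ i, x i ∈ K i) (hx' : ∀ i, x' i ∈ K i)
    {v v' : Fin (n+1) → ℝ} (hvx : ∀ i, v ⬝ᵥ x i = 0) (hvx' : ∀ i, v' ⬝ᵥ x' i = 0)
    (hv : ∀ i, ∀ y ∈ K i, 0 ≤ v ⬝ᵥ y) (hv' : ∀ i, ∀ y ∈ K i, 0 ≤ v' ⬝ᵥ y)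
    (h : 0 < s * ori x v) (h' : 0 < s * ori x' v') : ∃ c : ℝ, 0 < c ∧ v' = c • v := by
  have hs : s ≠ 0 := by rintro rfl; simp at h
  have hz : ∀ x : Fin n → Fin (n+1) → ℝ, ori x 0 = 0 := by
    intro x
    have := ori_smul x (0 : Fin (n+1) → ℝ) 0
    simpa using this
  have hv0 : v ≠ 0 := by rintro rfl; simp [hz] at h
  have hv0' : v' ≠ 0 := by rintro rfl; simp [hz] at h'
  by_contra hcon
  let u : ℝ → Fin (n+1) → ℝ := fun t => (1 - t) • v - t • v'
  have hu : ∀ t ∈ Set.Icc (0:ℝ) 1, u t ≠ 0 := by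
    intro t ht hut
    rcases ht.1.eq_or_lt with h0 | h0
    · subst h0; simp [u] at hut; exact hv0 hut
    rcases ht.2.eq_or_lt with h1 | h1
    · subst h1; simp [u] at hut; exact hv0' hut
    refine hcon ⟨(1 - t) / t, div_pos (by linarith) h0, ?_⟩
    have h2 : t • v' = (1 - t) • v := (sub_eq_zero.1 hut).symm
    rw [div_eq_inv_mul, mul_smul, ← h2, smul_smul, inv_mul_cancel₀ h0.ne', one_smul]
  have hpath : ∀ i, ∃ σ : ℝ → ℝ, ContinuousOn σ (Set.Icc 0 1) ∧
      ∀ t ∈ Set.Icc (0:ℝ) 1, σ t ∈ Set.Icc (0:ℝ) 1 ∧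
      (1 - t) * (σ t * (v ⬝ᵥ x' i)) - t * ((1 - σ t) * (v' ⬝ᵥ x i)) = 0 := by
    intro i
    have ha := hv i _ (hx' i)
    have hb := hv' i _ (hx i)
    set a := v ⬝ᵥ x' i
    set b := v' ⬝ᵥ x i
    rcases hb.eq_or_lt with hb | hb
    · refine ⟨fun _ => 0, continuousOn_const, fun t ht => ⟨by simp, by simp [← hb]⟩⟩
    rcases ha.eq_or_lt with ha | ha
    · refine ⟨fun _ => 1, continuousOn_const, fun t ht => ⟨by simp, by simp [← ha]⟩⟩
    have hden : ∀ t ∈ Set.Icc (0:ℝ) 1, 0 < (1 - t) * a + t * b := by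
      intro t ht
      rcases ht.1.eq_or_lt with h0 | h0
      · subst h0; simpa using ha
      · have := mul_pos h0 hb
        have := mul_nonneg (sub_nonneg.2 ht.2) ha.le
        linarith
    refine ⟨fun t => t * b / ((1 - t) * a + t * b), ?_, fun t ht => ?_⟩
    · refine ContinuousOn.div (by fun_prop) (by fun_prop) fun t ht => (hden t ht).ne'
    · have hd := hden t ht
      have h1 := mul_nonneg (sub_nonneg.2 ht.2) ha.le
      have h2 := mul_nonneg ht.1 hb.le
      refine ⟨⟨div_nonneg h2 hd.le, (div_le_one hd).2 (by linarith)⟩, ?_⟩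
      field_simp
      ring
  choose σ hσc hσ using hpath
  let p : ℝ → Fin n → Fin (n+1) → ℝ := fun t i => (1 - σ i t) • x i + σ i t • x' i
  have hpK : ∀ t ∈ Set.Icc (0:ℝ) 1, ∀ i, p t i ∈ K i := fun t ht i =>
    hconv i (hx i) (hx' i) (by linarith [(hσ i t ht).1.2]) (hσ i t ht).1.1 (by ring)
  have hp0 : ∀ t ∈ Set.Icc (0:ℝ) 1, ∀ i, u t ⬝ᵥ p t i = 0 := by
    intro t ht i
    have := (hσ i t ht).2
    simp only [u, p, dotProduct_add, sub_dotProduct, dotProduct_smul, smul_dotProduct, hvx, hvx',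
      smul_eq_mul]
    linarith
  have m0 : (0:ℝ) ∈ Set.Icc (0:ℝ) 1 := by simp
  have m1 : (1:ℝ) ∈ Set.Icc (0:ℝ) 1 := by simp
  have := ivt_pos (g := fun t => s * ori (p t) (u t)) ?_ ?_ ?_
  · have hu1 : u 1 = - v' := by simp [u]
    have hpos : 0 < s * ori (p 1) v' := by
      refine ori_pos_congr hS hconv s hx' (hpK 1 m1) hvx' (fun i => ?_) h'
      have := hp0 1 m1 i
      rw [hu1] at this
      simpa using this
    simp only [hu1, ori_neg] at this
    linarith
  · refine continuousOn_const.mul ?_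
    refine continuous_ori.comp_continuousOn (ContinuousOn.prodMk ?_ ?_)
    · refine continuousOn_pi.2 fun i => ?_
      have := hσc i
      fun_prop
    · exact Continuous.continuousOn (by fun_prop)
  · intro t ht
    exact mul_ne_zero hs (ori_ne hS (hpK t ht) (hu t ht) (hp0 t ht))
  · have hu0 : u 0 = v := by simp [u]
    simp only [hu0]
    refine ori_pos_congr hS hconv s hx (hpK 0 m0) hvx (fun i => ?_) h
    have := hp0 0 m0 i
    rwa [hu0] at this


lemma exists_kernel {n : ℕ} (x : Fin n → Fin (n+1) → ℝ) :
    ∃ v : Fin (n+1) → ℝ, v ≠ 0 ∧ ∀ i, v ⬝ᵥ x i = 0 := by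
  have h := LinearMap.ker_ne_bot_of_finrank_lt (f := (Matrix.of x).mulVecLin) (by simp)
  obtain ⟨v, hv, hne⟩ := (Submodule.ne_bot_iff _).1 h
  refine ⟨v, hne, fun i => ?_⟩
  have := congrFun (LinearMap.mem_ker.1 hv) i
  rw [dotProduct_comm]
  simpa [Matrix.mulVec] using this

/-- Existence for fat sets. -/
lemma exists_fat {n : ℕ} {K : Fin n → Set (Fin (n+1) → ℝ)} (hS : Sep K)
    (hconv : ∀ i, Convex ℝ (K i)) (hcomp : ∀ i, IsCompact (K i)) (hne : ∀ i, (K i).Nonempty)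
    (hfat : ∀ i, ∀ v : Fin (n+1) → ℝ, v ≠ 0 → ∃ x ∈ K i, v ⬝ᵥ x ≠ 0)
    {s : ℝ} (hs : s ≠ 0) :
    ∃ (v : Fin (n+1) → ℝ) (x : Fin n → Fin (n+1) → ℝ), ‖v‖ = 1 ∧ (∀ i, x i ∈ K i) ∧
      (∀ i, v ⬝ᵥ x i = 0) ∧ (∀ i, ∀ y ∈ K i, 0 ≤ v ⬝ᵥ y) ∧ 0 ≤ s * ori x v := by
  let T : Set (ℝ × (Fin (n+1) → ℝ) × (Fin n → (Fin (n+1) → ℝ)) × (Fin n → (Fin (n+1) → ℝ))) :=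
    {q | (∀ i, q.2.1 ⬝ᵥ q.2.2.1 i = 0) ∧ 0 ≤ s * ori q.2.2.1 q.2.1 ∧
      ∀ i, ∀ y ∈ K i, 0 ≤ (1 - q.1) * (q.2.1 ⬝ᵥ y) + q.1 * (q.2.1 ⬝ᵥ q.2.2.2 i)}
  let R : Set (ℝ × (Fin (n+1) → ℝ) × (Fin n → (Fin (n+1) → ℝ)) × (Fin n → (Fin (n+1) → ℝ))) :=
    Set.Icc 0 1 ×ˢ Metric.sphere 0 1 ×ˢ Set.pi Set.univ K ×ˢ Set.pi Set.univ K
  have hR : IsCompact R := isCompact_Icc.prod ((isCompact_sphere _ _).prod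
    ((isCompact_univ_pi hcomp).prod (isCompact_univ_pi hcomp)))
  have hT : IsClosed T := by
    have c1 : IsClosed {q : ℝ × (Fin (n+1) → ℝ) × (Fin n → (Fin (n+1) → ℝ)) × (Fin n → (Fin (n+1) → ℝ)) |
        ∀ i, q.2.1 ⬝ᵥ q.2.2.1 i = 0} := by
      rw [Set.ofPred_forall]
      refine isClosed_iInter fun i => isClosed_eq ?_ continuous_const
      unfold dotProduct; fun_prop
    have c2 : IsClosed {q : ℝ × (Fin (n+1) → ℝ) × (Fin n → (Fin (n+1) → ℝ)) × (Fin n → (Fin (n+1) → ℝ)) |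
        0 ≤ s * ori q.2.2.1 q.2.1} := by
      refine isClosed_le continuous_const (continuous_const.mul ?_)
      exact continuous_ori.comp (g := fun p : (Fin n → (Fin (n+1) → ℝ)) × (Fin (n+1) → ℝ) => ori p.1 p.2)
        (f := fun q : ℝ × (Fin (n+1) → ℝ) × (Fin n → (Fin (n+1) → ℝ)) × (Fin n → (Fin (n+1) → ℝ)) => (q.2.2.1, q.2.1)) (by fun_prop)
    have c3 : IsClosed {q : ℝ × (Fin (n+1) → ℝ) × (Fin n → (Fin (n+1) → ℝ)) × (Fin n → (Fin (n+1) → ℝ)) |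
        ∀ i, ∀ y ∈ K i, 0 ≤ (1 - q.1) * (q.2.1 ⬝ᵥ y) + q.1 * (q.2.1 ⬝ᵥ q.2.2.2 i)} := by
      simp only [Set.ofPred_forall]
      refine isClosed_iInter fun i => isClosed_iInter fun y => isClosed_iInter fun _ =>
        isClosed_le continuous_const ?_
      unfold dotProduct; fun_prop
    exact c1.inter (c2.inter c3)
  have hRT : IsCompact (R ∩ T) := hR.inter_right hT
  have hnorm : ∀ (l : ℝ) (v : (Fin (n+1) → ℝ)) (x z : Fin n → (Fin (n+1) → ℝ)), l ∈ Set.Icc (0:ℝ) 1 → v ≠ 0 →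
      (∀ i, x i ∈ K i) → (∀ i, z i ∈ K i) → (l, v, x, z) ∈ T →
      ∃ v', (l, v', x, z) ∈ R ∩ T := by
    intro l v x z hl hv hx hz ⟨h1, h2, h3⟩
    simp only at h1 h2 h3
    have hpos : 0 < ‖v‖⁻¹ := inv_pos.2 (norm_pos_iff.2 hv)
    refine ⟨‖v‖⁻¹ • v, ⟨hl, ?_, fun i _ => hx i, fun i _ => hz i⟩, ?_, ?_, ?_⟩
    · simp [norm_smul, norm_ne_zero_iff.2 hv]
    · intro i; simp [smul_dotProduct, h1 i]
    · simp only [ori_smul]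
      have := mul_nonneg hpos.le h2
      linarith
    · intro i y hy
      have := mul_nonneg hpos.le (h3 i y hy)
      simp only [smul_dotProduct, smul_eq_mul] at this ⊢
      linarith
  have hnonempty : (R ∩ T).Nonempty := by
    choose x hx using hne
    obtain ⟨v, hv, hvx⟩ := exists_kernel x
    have key : ∀ v : (Fin (n+1) → ℝ), v ≠ 0 → (∀ i, v ⬝ᵥ x i = 0) → 0 ≤ s * ori x v → (R ∩ T).Nonempty := by
      intro v hv hvx ho
      obtain ⟨v', h⟩ := hnorm 1 v x x (by simp) hv hx hx ⟨hvx, ho, by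
        intro i y _; simp [hvx]⟩
      exact ⟨_, h⟩
    rcases le_total 0 (s * ori x v) with h | h
    · exact key v hv hvx h
    · refine key (-v) (neg_ne_zero.2 hv) (by simpa using hvx) ?_
      rw [ori_neg]; linarith
  obtain ⟨⟨l, v, x, z⟩, ⟨⟨hl, hvs, hx, hz⟩, ⟨h1, h2, h3⟩⟩, hmin⟩ :=
    hRT.exists_isMinOn hnonempty (f := Prod.fst) continuous_fst.continuousOn
  simp only at hl hvs h1 h2 h3
  replace hx : ∀ i, x i ∈ K i := fun i => hx i (Set.mem_univ _)
  replace hz : ∀ i, z i ∈ K i := fun i => hz i (Set.mem_univ _)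
  have hv1 : ‖v‖ = 1 := by simpa using hvs
  have hv0 : v ≠ 0 := by rintro rfl; simp at hv1
  rcases hl.1.eq_or_lt with hl0 | hl0
  · subst hl0
    refine ⟨v, x, hv1, hx, h1, fun i y hy => ?_, h2⟩
    have := h3 i y hy
    simpa using this
  exfalso
  have h2' : 0 < s * ori x v :=
    lt_of_le_of_ne h2 (mul_ne_zero hs (ori_ne hS hx hv0 h1)).symm
  obtain ⟨w, hw1, hw2⟩ := hS {i | ∃ y ∈ K i, v ⬝ᵥ y < 0}
  -- auxiliary points
  have hy : ∀ i, ∃ y ∈ K i, ((∃ y ∈ K i, v ⬝ᵥ y < 0) → v ⬝ᵥ y < 0) ∧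
      ((¬ ∃ y ∈ K i, v ⬝ᵥ y < 0) → 0 < v ⬝ᵥ y) := by
    intro i
    by_cases hi : ∃ y ∈ K i, v ⬝ᵥ y < 0
    · obtain ⟨y, hy, hlt⟩ := hi
      exact ⟨y, hy, fun _ => hlt, fun h => absurd ⟨y, hy, hlt⟩ h⟩
    · obtain ⟨y, hy, hne⟩ := hfat i v hv0
      refine ⟨y, hy, fun h => absurd h hi, fun _ => ?_⟩
      push Not at hi
      exact lt_of_le_of_ne (hi y hy) hne.symm
  choose y hyK hyn hyp using hy
  let V : ℝ → (Fin (n+1) → ℝ) := fun t => v + t • w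
  have hV : Continuous V := by fun_prop
  have hV0 : V 0 = v := by simp [V]
  let σ : Fin n → ℝ → ℝ := fun i t => t * (w ⬝ᵥ x i) / (t * (w ⬝ᵥ x i) - V t ⬝ᵥ y i)
  have hvy : ∀ i, v ⬝ᵥ y i ≠ 0 := by
    intro i
    by_cases hi : ∃ y ∈ K i, v ⬝ᵥ y < 0
    · exact (hyn i hi).ne
    · exact (hyp i hi).ne'
  have hden : ∀ i, ContinuousAt (fun t => t * (w ⬝ᵥ x i) - V t ⬝ᵥ y i) 0 := by
    intro i; unfold dotProduct; fun_prop
  have hσc : ∀ i, ContinuousAt (σ i) 0 := by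
    intro i
    refine ContinuousAt.div (by fun_prop) (hden i) ?_
    simpa [hV0] using hvy i
  have hσ0 : ∀ i, σ i 0 = 0 := by intro i; simp [σ]
  let P : ℝ → Fin n → (Fin (n+1) → ℝ) := fun t i => (1 - σ i t) • x i + σ i t • y i
  have hP0 : P 0 = x := by ext i; simp [P, hσ0]
  have hPc : ContinuousAt P 0 := by
    refine continuousAt_pi.2 fun i => ?_
    have := hσc i
    fun_prop
  -- eventual statements
  have e1 : ∀ᶠ t in 𝓝[>] (0:ℝ), 0 < s * ori (P t) (V t) := by
    have hc : ContinuousAt (fun t => s * ori (P t) (V t)) 0 :=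
      continuousAt_const.mul (ContinuousAt.comp
        (g := fun p : (Fin n → (Fin (n+1) → ℝ)) × (Fin (n+1) → ℝ) => ori p.1 p.2) (f := fun t => (P t, V t))
        continuous_ori.continuousAt (hPc.prodMk hV.continuousAt))
    have := hc.eventually (lt_mem_nhds (a := 0) (by simpa [hP0, hV0] using h2'))
    exact this.filter_mono nhdsWithin_le_nhds
  have e2 : ∀ᶠ t in 𝓝[>] (0:ℝ), ∀ i, σ i t ≤ 1 := by
    rw [eventually_all]
    intro i
    have := (hσc i).eventually (gt_mem_nhds (a := 1) (by rw [hσ0]; exact one_pos))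
    exact (this.mono fun t h => le_of_lt h).filter_mono nhdsWithin_le_nhds
  have hVy : ∀ i, ContinuousAt (fun t => V t ⬝ᵥ y i) 0 := by
    intro i; unfold dotProduct; fun_prop
  have e3 : ∀ᶠ t in 𝓝[>] (0:ℝ), ∀ i, ((∃ y ∈ K i, v ⬝ᵥ y < 0) → V t ⬝ᵥ y i < 0) ∧
      ((¬ ∃ y ∈ K i, v ⬝ᵥ y < 0) → 0 < V t ⬝ᵥ y i) := by
    rw [eventually_all]
    intro i
    by_cases hi : ∃ y ∈ K i, v ⬝ᵥ y < 0
    · have := (hVy i).eventually (gt_mem_nhds (a := 0) (by simpa [hV0] using hyn i hi))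
      exact (this.mono fun t h => ⟨fun _ => h, fun h' => absurd hi h'⟩).filter_mono
        nhdsWithin_le_nhds
    · have := (hVy i).eventually (lt_mem_nhds (a := 0) (by simpa [hV0] using hyp i hi))
      exact (this.mono fun t h => ⟨fun h' => absurd h' hi, fun _ => h⟩).filter_mono
        nhdsWithin_le_nhds
  have e4 : ∀ᶠ t in 𝓝[>] (0:ℝ), ∀ i, (¬ ∃ y ∈ K i, v ⬝ᵥ y < 0) →
      ∀ y' ∈ K i, 0 < (1 - l) * (V t ⬝ᵥ y') + l * (V t ⬝ᵥ y i) := by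
    rw [eventually_all]
    intro i
    by_cases hi : ∃ y ∈ K i, v ⬝ᵥ y < 0
    · exact Eventually.of_forall fun t h => absurd hi h
    have := (hcomp i).eventually_forall_of_forall_eventually (x₀ := (0:ℝ))
      (P := fun t y' => 0 < (1 - l) * (V t ⬝ᵥ y') + l * (V t ⬝ᵥ y i)) (by
        intro y' hy'
        have hc : ContinuousAt (fun q : ℝ × (Fin (n+1) → ℝ) => (1 - l) * (V q.1 ⬝ᵥ q.2) + l * (V q.1 ⬝ᵥ y i))
            ((0:ℝ), y') := by
          unfold dotProduct; fun_prop
        refine hc.eventually (lt_mem_nhds (a := 0) ?_)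
        simp only [hV0]
        have h4 := mul_pos hl0 (hyp i hi)
        push Not at hi
        have h5 := mul_nonneg (sub_nonneg.2 hl.2) (hi y' hy')
        linarith)
    exact (this.mono fun t h _ => h).filter_mono nhdsWithin_le_nhds
  obtain ⟨t, ⟨⟨⟨f1, f2⟩, f3⟩, f4⟩, ht⟩ :=
    ((((e1.and e2).and e3).and e4).and self_mem_nhdsWithin).exists
  replace ht : 0 < t := ht
  have hVt0 : V t ≠ 0 := by
    intro h
    rw [h] at f1
    have := ori_smul (P t) (0 : Fin (n+1) → ℝ) 0
    simp at this; simp [this] at f1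
  have hVx : ∀ i, V t ⬝ᵥ x i = t * (w ⬝ᵥ x i) := by
    intro i; simp [V, add_dotProduct, smul_dotProduct, h1]
  have hσt : ∀ i, 0 ≤ σ i t ∧ t * (w ⬝ᵥ x i) - V t ⬝ᵥ y i ≠ 0 := by
    intro i
    by_cases hi : ∃ y ∈ K i, v ⬝ᵥ y < 0
    · have a1 := mul_pos ht (hw1 i hi _ (hx i))
      have a2 := (f3 i).1 hi
      exact ⟨div_nonneg a1.le (by linarith), by linarith⟩
    · have a1 := mul_neg_of_pos_of_neg ht (hw2 i hi _ (hx i))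
      have a2 := (f3 i).2 hi
      exact ⟨div_nonneg_of_nonpos a1.le (by linarith), by linarith⟩
  have hPK : ∀ i, P t i ∈ K i := fun i =>
    hconv i (hx i) (hyK i) (by linarith [f2 i]) (hσt i).1 (by ring)
  have hPV : ∀ i, V t ⬝ᵥ P t i = 0 := by
    intro i
    have hd := (hσt i).2
    simp only [P, dotProduct_add, dotProduct_smul, smul_eq_mul, hVx, σ]
    field_simp
    ring
  have hstrict : ∀ i, ∃ z' ∈ K i, ∀ y' ∈ K i, 0 < (1 - l) * (V t ⬝ᵥ y') + l * (V t ⬝ᵥ z') := by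
    intro i
    by_cases hi : ∃ y ∈ K i, v ⬝ᵥ y < 0
    · refine ⟨z i, hz i, fun y' hy' => ?_⟩
      have a1 := h3 i y' hy'
      have a2 := mul_nonneg (sub_nonneg.2 hl.2) (mul_pos ht (hw1 i hi y' hy')).le
      have a3 := mul_pos hl0 (mul_pos ht (hw1 i hi _ (hz i)))
      simp only [V, add_dotProduct, smul_dotProduct, smul_eq_mul]
      linarith
    · exact ⟨y i, hyK i, f4 i hi⟩
  choose z' hz' hz'2 using hstrict
  have e5 : ∀ᶠ l' in 𝓝 l, ∀ i, ∀ y' ∈ K i,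
      0 < (1 - l') * (V t ⬝ᵥ y') + l' * (V t ⬝ᵥ z' i) := by
    rw [eventually_all]
    intro i
    refine (hcomp i).eventually_forall_of_forall_eventually fun y' hy' => ?_
    have hc : ContinuousAt (fun q : ℝ × (Fin (n+1) → ℝ) => (1 - q.1) * (V t ⬝ᵥ q.2) + q.1 * (V t ⬝ᵥ z' i))
        (l, y') := by
      unfold dotProduct; fun_prop
    exact hc.eventually (lt_mem_nhds (hz'2 i y' hy'))
  have e6 : ∀ᶠ l' in 𝓝 l, 0 < l' := lt_mem_nhds hl0
  obtain ⟨l', ⟨g1, g2⟩, g3⟩ :=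
    (((e5.and e6).filter_mono nhdsWithin_le_nhds).and
      (self_mem_nhdsWithin (a := l) (s := Set.Iio l))).exists
  replace g3 : l' < l := g3
  obtain ⟨v', hv'⟩ := hnorm l' (V t) (P t) z' ⟨g2.le, by linarith [hl.2]⟩ hVt0 hPK hz'
    ⟨hPV, f1.le, fun i y' hy' => (g1 i y' hy').le⟩
  have := hmin hv'
  simp only [Set.mem_ofPred_eq] at this
  linarith

/-- Separation survives small thickenings. -/
lemma sep_thick {n : ℕ} {K : Fin n → Set (Fin (n+1) → ℝ)} (hS : Sep K)
    (hcomp : ∀ i, IsCompact (K i)) :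
    ∃ δ₀ : ℝ, 0 < δ₀ ∧ ∀ δ ≤ δ₀, Sep fun i => Metric.cthickening δ (K i) := by
  have key : ∀ (I : Set (Fin n)), ∃ δ₀ : ℝ, 0 < δ₀ ∧ ∀ δ ≤ δ₀, ∃ w : Fin (n+1) → ℝ,
      (∀ i ∈ I, ∀ x ∈ Metric.cthickening δ (K i), 0 < w ⬝ᵥ x) ∧
      (∀ i, i ∉ I → ∀ x ∈ Metric.cthickening δ (K i), w ⬝ᵥ x < 0) := by
    intro I
    obtain ⟨w, hw1, hw2⟩ := hS I
    have hwc : Continuous fun x : Fin (n+1) → ℝ => w ⬝ᵥ x := by unfold dotProduct; fun_prop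
    have : ∀ i, ∃ δ : ℝ, 0 < δ ∧ (i ∈ I → ∀ x ∈ Metric.cthickening δ (K i), 0 < w ⬝ᵥ x) ∧
        (i ∉ I → ∀ x ∈ Metric.cthickening δ (K i), w ⬝ᵥ x < 0) := by
      intro i
      by_cases hi : i ∈ I
      · obtain ⟨δ, h, h'⟩ := (hcomp i).exists_cthickening_subset_open
          (isOpen_lt continuous_const hwc) (fun x hx => hw1 i hi x hx)
        exact ⟨δ, h, fun _ x hx => h' hx, fun h => absurd hi h⟩
      · obtain ⟨δ, h, h'⟩ := (hcomp i).exists_cthickening_subset_open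
          (isOpen_lt hwc continuous_const) (fun x hx => hw2 i hi x hx)
        exact ⟨δ, h, fun h => absurd h hi, fun _ x hx => h' hx⟩
    choose δ hδ hd1 hd2 using this
    obtain ⟨δ₀, h0, hle⟩ : ∃ δ₀ : ℝ, 0 < δ₀ ∧ ∀ i, δ₀ ≤ δ i := by
      have : ∀ᶠ e in 𝓝[>] (0:ℝ), ∀ i, e ≤ δ i := by
        rw [eventually_all]
        exact fun i => ((gt_mem_nhds (hδ i)).mono fun _ h => le_of_lt h).filter_mono
          nhdsWithin_le_nhds
      obtain ⟨e, he, he'⟩ := (this.and self_mem_nhdsWithin).exists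
      exact ⟨e, he', he⟩
    refine ⟨δ₀, h0, fun e he => ⟨w, fun i hi x hx => ?_, fun i hi x hx => ?_⟩⟩
    · exact hd1 i hi x (Metric.cthickening_mono (he.trans (hle i)) _ hx)
    · exact hd2 i hi x (Metric.cthickening_mono (he.trans (hle i)) _ hx)
  choose δ hδ hd using key
  have : ∀ᶠ e in 𝓝[>] (0:ℝ), ∀ I, e ≤ δ I := by
    rw [eventually_all]
    exact fun i => ((gt_mem_nhds (hδ i)).mono fun _ h => le_of_lt h).filter_mono
      nhdsWithin_le_nhds
  obtain ⟨e, he, he'⟩ := (this.and self_mem_nhdsWithin).exists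
  exact ⟨e, he', fun e' h I => hd I e' (h.trans (he I))⟩

lemma exists_sol {n : ℕ} {K : Fin n → Set (Fin (n+1) → ℝ)} (hS : Sep K)
    (hconv : ∀ i, Convex ℝ (K i)) (hcomp : ∀ i, IsCompact (K i)) (hne : ∀ i, (K i).Nonempty)
    {s : ℝ} (hs : s ≠ 0) :
    ∃ (v : Fin (n+1) → ℝ) (x : Fin n → Fin (n+1) → ℝ), v ≠ 0 ∧ (∀ i, x i ∈ K i) ∧
      (∀ i, v ⬝ᵥ x i = 0) ∧ (∀ i, ∀ y ∈ K i, 0 ≤ v ⬝ᵥ y) ∧ 0 < s * ori x v := by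
  obtain ⟨δ₀, hδ₀, hsep⟩ := sep_thick hS hcomp
  let e : ℕ → ℝ := fun k => δ₀ * (1 / ((k:ℝ) + 1))
  have he0 : ∀ k, 0 < e k := fun k => by positivity
  have hele : ∀ k, e k ≤ δ₀ := by
    intro k
    have : (1 : ℝ) / ((k:ℝ) + 1) ≤ 1 := by
      rw [div_le_one (by positivity)]; linarith [(Nat.cast_nonneg k : (0:ℝ) ≤ k)]
    exact mul_le_of_le_one_right hδ₀.le this
  have helim : Tendsto e atTop (𝓝 0) := by
    have := tendsto_one_div_add_atTop_nhds_zero_nat (𝕜 := ℝ) |>.const_mul δ₀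
    simpa [e] using this
  have hex : ∀ k, ∃ q : (Fin (n+1) → ℝ) × (Fin n → (Fin (n+1) → ℝ)), ‖q.1‖ = 1 ∧
      (∀ i, q.2 i ∈ Metric.cthickening (e k) (K i)) ∧
      (∀ i, q.1 ⬝ᵥ q.2 i = 0) ∧ (∀ i, ∀ y ∈ K i, 0 ≤ q.1 ⬝ᵥ y) ∧ 0 ≤ s * ori q.2 q.1 := by
    intro k
    obtain ⟨v, x, a1, a2, a3, a4, a5⟩ := exists_fat (hsep (e k) (hele k))
      (fun i => (hconv i).cthickening _) (fun i => (hcomp i).cthickening)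
      (fun i => (hne i).mono (Metric.self_subset_cthickening _)) (by
        intro i v hv
        obtain ⟨x0, hx0⟩ := hne i
        by_cases h : v ⬝ᵥ x0 = 0
        · have hn : 0 < ‖v‖ := norm_pos_iff.2 hv
          refine ⟨x0 + (e k / ‖v‖) • v, ?_, ?_⟩
          · refine Metric.mem_cthickening_of_dist_le _ x0 _ _ hx0 ?_
            rw [dist_eq_norm, add_sub_cancel_left, norm_smul, Real.norm_eq_abs,
              abs_of_pos (div_pos (he0 k) hn), div_mul_cancel₀ _ hn.ne']
          · rw [dotProduct_add, h, zero_add, dotProduct_smul]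
            exact mul_ne_zero (div_pos (he0 k) hn).ne' (fun h => hv (dotProduct_self_eq_zero.1 h))
        · exact ⟨x0, Metric.self_subset_cthickening _ hx0, h⟩) hs
    exact ⟨(v, x), a1, a2, a3, fun i y hy => a4 i y (Metric.self_subset_cthickening _ hy), a5⟩
  choose q q1 q2 q3 q4 q5 using hex
  have hR : IsCompact ((Metric.sphere (0:(Fin (n+1) → ℝ)) 1) ×ˢ
      Set.pi Set.univ fun i => Metric.cthickening δ₀ (K i)) :=
    (isCompact_sphere _ _).prod (isCompact_univ_pi fun i => (hcomp i).cthickening)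
  obtain ⟨⟨v, x⟩, hvx, φ, hφ, hlim⟩ := hR.tendsto_subseq (x := q) (fun k =>
    ⟨by simpa using q1 k, fun i _ => Metric.cthickening_mono (hele k) _ (q2 k i)⟩)
  have hv1 : ‖v‖ = 1 := by simpa using hvx.1
  have hv0 : v ≠ 0 := by rintro rfl; simp at hv1
  have hxK : ∀ i, x i ∈ K i := by
    intro i
    rw [← (hcomp i).isClosed.closure_eq, ← Metric.cthickening_zero,
      Metric.cthickening_eq_iInter_cthickening]
    simp only [Set.mem_iInter]
    intro ε hε
    have hc : Tendsto (fun k => (q (φ k)).2 i) atTop (𝓝 (x i)) := by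
      have : Continuous fun p : (Fin (n+1) → ℝ) × (Fin n → (Fin (n+1) → ℝ)) => p.2 i := by fun_prop
      exact (this.tendsto (v, x)).comp hlim
    refine Metric.isClosed_cthickening.mem_of_tendsto hc ?_
    have := (helim.comp hφ.tendsto_atTop).eventually (gt_mem_nhds hε)
    exact this.mono fun k hk => Metric.cthickening_mono (le_of_lt hk) _ (q2 _ i)
  have hvx0 : ∀ i, v ⬝ᵥ x i = 0 := by
    intro i
    have : IsClosed {p : (Fin (n+1) → ℝ) × (Fin n → (Fin (n+1) → ℝ)) | p.1 ⬝ᵥ p.2 i = 0} :=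
      isClosed_eq (by unfold dotProduct; fun_prop) continuous_const
    exact this.mem_of_tendsto hlim (Eventually.of_forall fun k => q3 _ i)
  refine ⟨v, x, hv0, hxK, hvx0, ?_, ?_⟩
  · intro i y hy
    have : IsClosed {p : (Fin (n+1) → ℝ) × (Fin n → (Fin (n+1) → ℝ)) | 0 ≤ p.1 ⬝ᵥ y} :=
      isClosed_le continuous_const (by unfold dotProduct; fun_prop)
    exact this.mem_of_tendsto hlim (Eventually.of_forall fun k => q4 _ i y hy)
  · refine lt_of_le_of_ne ?_ (mul_ne_zero hs (ori_ne hS hxK hv0 hvx0)).symm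
    have : IsClosed {p : (Fin (n+1) → ℝ) × (Fin n → (Fin (n+1) → ℝ)) | 0 ≤ s * ori p.2 p.1} :=
      isClosed_le continuous_const (continuous_const.mul (continuous_ori.comp
        (g := fun p : (Fin n → (Fin (n+1) → ℝ)) × (Fin (n+1) → ℝ) => ori p.1 p.2) continuous_swap))
    exact this.mem_of_tendsto hlim (Eventually.of_forall fun k => q5 _)

lemma hull_pos {m : ℕ} {C : Set (Fin m → ℝ)} (hC : IsCompact C) (hne : C.Nonempty)
    {w : Fin m → ℝ} (h : ∀ x ∈ C, 0 < w ⬝ᵥ x) :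
    ∀ x ∈ closure (convexHull ℝ C), 0 < w ⬝ᵥ x := by
  have hwc : Continuous fun x : Fin m → ℝ => w ⬝ᵥ x := by unfold dotProduct; fun_prop
  obtain ⟨x0, hx0, hmin⟩ := hC.exists_isMinOn hne hwc.continuousOn
  intro x hx
  have hsub : closure (convexHull ℝ C) ⊆ {x | w ⬝ᵥ x0 ≤ w ⬝ᵥ x} := by
    refine closure_minimal (convexHull_min (fun y hy => hmin hy) ?_)
      (isClosed_le continuous_const hwc)
    exact convex_halfSpace_ge ⟨fun a b => dotProduct_add _ _ _, fun c a => dotProduct_smul _ _ _⟩ _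
  exact (h x0 hx0).trans_le (hsub hx)

lemma hull_nonneg {m : ℕ} {C : Set (Fin m → ℝ)}
    {w : Fin m → ℝ} (h : ∀ x ∈ C, 0 ≤ w ⬝ᵥ x) :
    ∀ x ∈ closure (convexHull ℝ C), 0 ≤ w ⬝ᵥ x := by
  have hwc : Continuous fun x : Fin m → ℝ => w ⬝ᵥ x := by unfold dotProduct; fun_prop
  have hsub : closure (convexHull ℝ C) ⊆ {x | 0 ≤ w ⬝ᵥ x} := by
    refine closure_minimal (convexHull_min (fun y hy => h y hy) ?_)
      (isClosed_le continuous_const hwc)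
    exact convex_halfSpace_ge ⟨fun a b => dotProduct_add _ _ _, fun c a => dotProduct_smul _ _ _⟩ _
  exact fun x hx => hsub hx

/-- Homogenization of a point with a sign. -/
noncomputable def emb {d : ℕ} (ε : ℝ) (x : EuclideanSpace ℝ (Fin d)) : Fin (d+1) → ℝ :=
  Fin.cons (-ε) (fun j => ε * x j)

/-- Homogenization of a hyperplane. -/
noncomputable def lft {d : ℕ} (p : EuclideanSpace ℝ (Fin d) × ℝ) : Fin (d+1) → ℝ :=
  Fin.cons p.2 (fun j => p.1 j)

lemma lft_emb {d : ℕ} (ε : ℝ) (x : EuclideanSpace ℝ (Fin d)) (p : EuclideanSpace ℝ (Fin d) × ℝ) :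
    lft p ⬝ᵥ emb ε x = ε * (⟪p.1, x⟫_ℝ - p.2) := by
  simp only [lft, emb, dotProduct, Fin.sum_univ_succ, Fin.cons_zero, Fin.cons_succ,
    PiLp.inner_apply, RCLike.inner_apply, conj_trivial, mul_sub, Finset.mul_sum]
  rw [add_comm, sub_eq_add_neg]
  congr 1
  · exact Finset.sum_congr rfl fun i _ => by ring
  · ring

lemma continuous_emb {d : ℕ} (ε : ℝ) :
    Continuous (emb ε : EuclideanSpace ℝ (Fin d) → Fin (d+1) → ℝ) := by
  unfold emb
  refine continuous_pi fun j => ?_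
  refine Fin.cases ?_ (fun i => ?_) j
  · simp only [Fin.cons_zero]; fun_prop
  · simp only [Fin.cons_succ]; fun_prop

lemma lft_surj {d : ℕ} (v : Fin (d+1) → ℝ) : ∃ p : EuclideanSpace ℝ (Fin d) × ℝ, lft p = v := by
  refine ⟨(WithLp.toLp 2 (fun j => v j.succ), v 0), ?_⟩
  ext j
  refine Fin.cases ?_ (fun i => ?_) j <;> simp [lft]

lemma lft_smul {d : ℕ} (c : ℝ) (p : EuclideanSpace ℝ (Fin d) × ℝ) : lft (c • p) = c • lft p := by
  ext j
  refine Fin.cases ?_ (fun i => ?_) j <;> simp [lft]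

lemma lft_inj {d : ℕ} {p q : EuclideanSpace ℝ (Fin d) × ℝ} (h : lft p = lft q) : p = q := by
  refine Prod.ext ?_ ?_
  · ext i
    simpa [lft] using congrFun h i.succ
  · simpa [lft] using congrFun h 0

end CSP

open CSP Matrix

/-- For a strongly separated, affinely spanning family of `d` nonempty compact sets in
`ℝ^d` and a partition `A ⊔ B = [d]`, there are exactly two oriented hyperplanes `(u, α)`
tangent to every set, with the sets of `A` on the nonnegative side and the sets of `B` on
the nonpositive side. -/
theorem compact_sets_per_partition {d : ℕ}
    (C : Fin d → Set (EuclideanSpace ℝ (Fin d)))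
    (hcomp : ∀ i, IsCompact (C i)) (hne : ∀ i, (C i).Nonempty)
    (hspan : affineSpan ℝ (⋃ i, C i) = ⊤)
    (hsep : StronglySeparated C)
    (A B : Finset (Fin d)) (hdisj : Disjoint A B) (hunion : A ∪ B = Finset.univ) :
    {p : EuclideanSpace ℝ (Fin d) × ℝ | ‖p.1‖ = 1 ∧
        (∀ i : Fin d, ({x | ⟪p.1, x⟫_ℝ = p.2} ∩ C i).Nonempty) ∧
        (∀ a ∈ A, C a ⊆ {x | p.2 ≤ ⟪p.1, x⟫_ℝ}) ∧
        (∀ b ∈ B, C b ⊆ {x | ⟪p.1, x⟫_ℝ ≤ p.2})}.encard = 2 := by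
  classical

  have hd : 0 < d := by
    rcases Nat.eq_zero_or_pos d with h | h
    · subst h
      simp at hspan
    · exact h
  have hB : ∀ i, i ∈ B ↔ i ∉ A := by
    intro i
    constructor
    · exact fun h h' => Finset.disjoint_left.1 hdisj h' h
    · intro h
      have : i ∈ A ∪ B := by rw [hunion]; exact Finset.mem_univ i
      exact (Finset.mem_union.1 this).resolve_left h
  set S : Set (EuclideanSpace ℝ (Fin d) × ℝ) := {p | ‖p.1‖ = 1 ∧
        (∀ i : Fin d, ({x | ⟪p.1, x⟫_ℝ = p.2} ∩ C i).Nonempty) ∧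
        (∀ a ∈ A, C a ⊆ {x | p.2 ≤ ⟪p.1, x⟫_ℝ}) ∧
        (∀ b ∈ B, C b ⊆ {x | ⟪p.1, x⟫_ℝ ≤ p.2})} with hSdef
  let ε : Fin d → ℝ := fun i => if i ∈ A then 1 else -1
  have hε0 : ∀ i, ε i ≠ 0 := by intro i; by_cases h : i ∈ A <;> simp [ε, h]
  let D : Fin d → Set (Fin (d+1) → ℝ) := fun i => emb (ε i) '' C i
  have hD : ∀ i, IsCompact (D i) := fun i => (hcomp i).image (continuous_emb _)
  have hDne : ∀ i, (D i).Nonempty := fun i => (hne i).image _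
  let K : Fin d → Set (Fin (d+1) → ℝ) := fun i => closure (convexHull ℝ (D i))
  have hDK : ∀ i, D i ⊆ K i := fun i => (subset_convexHull ℝ _).trans subset_closure
  have hKconv : ∀ i, Convex ℝ (K i) := fun i => (convex_convexHull ℝ _).closure
  have hKcomp : ∀ i, IsCompact (K i) := fun i =>
    Metric.isCompact_of_isClosed_isBounded isClosed_closure
      ((isBounded_convexHull.2 (hD i).isBounded).closure)
  have hKne : ∀ i, (K i).Nonempty := fun i => (hDne i).mono (hDK i)
  have hKsep : Sep K := by
    intro I
    obtain ⟨u, α, -, h1, h2⟩ := hsep (Finset.univ.filter fun i => ¬ (i ∈ I ↔ i ∈ A))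
    have h1' : ∀ i, ¬ (i ∈ I ↔ i ∈ A) → ∀ x ∈ C i, ⟪u, x⟫_ℝ < α := fun i hi =>
      h1 i (by simpa using hi)
    have h2' : ∀ i, (i ∈ I ↔ i ∈ A) → ∀ x ∈ C i, α < ⟪u, x⟫_ℝ := fun i hi =>
      h2 i (by simpa using hi)
    refine ⟨lft (u, α), fun i hi => hull_pos (hD i) (hDne i) ?_, fun i hi => ?_⟩
    · rintro _ ⟨x, hx, rfl⟩
      rw [lft_emb]
      by_cases hA : i ∈ A
      · have := h2' i (by tauto) x hx
        simp [ε, hA, this]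
      · have := h1' i (by tauto) x hx
        simp [ε, hA, this]
    · have := hull_pos (hD i) (hDne i) (w := - lft (u, α)) (by
        rintro _ ⟨x, hx, rfl⟩
        rw [neg_dotProduct, lft_emb]
        by_cases hA : i ∈ A
        · have := h1' i (by tauto) x hx
          simp [ε, hA, this]
        · have := h2' i (by tauto) x hx
          simp [ε, hA, this])
      intro x hx
      have := this x hx
      rw [neg_dotProduct] at this
      linarith
  have hmem : ∀ p, p ∈ S ↔ ‖p.1‖ = 1 ∧ (∃ x : Fin d → Fin (d+1) → ℝ, (∀ i, x i ∈ K i) ∧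
      ∀ i, lft p ⬝ᵥ x i = 0) ∧ ∀ i, ∀ y ∈ K i, 0 ≤ lft p ⬝ᵥ y := by
    intro p
    constructor
    · rintro ⟨h1, h2, h3, h4⟩
      refine ⟨h1, ?_, fun i => hull_nonneg ?_⟩
      · choose x hx hxC using h2
        refine ⟨fun i => emb (ε i) (x i), fun i => hDK i ⟨x i, hxC i, rfl⟩, fun i => ?_⟩
        have : ⟪p.1, x i⟫_ℝ = p.2 := hx i
        rw [lft_emb, this]; simp
      · rintro _ ⟨x, hx, rfl⟩
        rw [lft_emb]
        by_cases hA : i ∈ A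
        · have : p.2 ≤ ⟪p.1, x⟫_ℝ := h3 i hA hx
          simp [ε, hA, this]
        · have : ⟪p.1, x⟫_ℝ ≤ p.2 := h4 i ((hB i).2 hA) hx
          simp [ε, hA, this]
    · rintro ⟨h1, ⟨x, hx, hx0⟩, h3⟩
      have hC : ∀ i, ∀ x ∈ C i, 0 ≤ ε i * (⟪p.1, x⟫_ℝ - p.2) := by
        intro i x hx
        rw [← lft_emb]
        exact h3 i _ (hDK i ⟨x, hx, rfl⟩)
      refine ⟨h1, fun i => ?_, fun a ha x hx => ?_, fun b hb x hx => ?_⟩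
      · by_contra hcon
        have := hull_pos (hD i) (hDne i) (w := lft p) (by
          rintro _ ⟨y, hy, rfl⟩
          refine lt_of_le_of_ne (h3 i _ (hDK i ⟨y, hy, rfl⟩)) fun h => hcon ⟨y, ?_, hy⟩
          rw [lft_emb] at h
          exact sub_eq_zero.1 ((mul_eq_zero.1 h.symm).resolve_left (hε0 i))) (x i) (hx i)
        rw [hx0 i] at this
        exact lt_irrefl _ this
      · have := hC a x hx
        simpa [ε, ha] using this
      · have := hC b x hx
        simpa [ε, (hB b).1 hb] using this
  have hlift0 : ∀ p ∈ S, lft p ≠ 0 := by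
    intro p hp h
    have h1 := ((hmem p).1 hp).1
    have : p = 0 := lft_inj (by rw [h]; simpa using (lft_smul 0 p).symm)
    rw [this] at h1
    simp at h1
  have hex : ∀ s : ℝ, s ≠ 0 → ∃ p ∈ S, ∃ x : Fin d → Fin (d+1) → ℝ, (∀ i, x i ∈ K i) ∧
      (∀ i, lft p ⬝ᵥ x i = 0) ∧ 0 < s * ori x (lft p) := by
    intro s hs
    obtain ⟨v, x, hv0, hx, hvx, hv, ho⟩ := exists_sol hKsep hKconv hKcomp hKne hs
    obtain ⟨p, rfl⟩ := lft_surj v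
    have hp1 : p.1 ≠ 0 := by
      intro h
      have hp2 : p.2 ≠ 0 := by
        intro h'
        apply hv0
        have : p = 0 := Prod.ext h h'
        rw [this]
        simpa using lft_smul 0 (0 : EuclideanSpace ℝ (Fin d) × ℝ)
      have hpos : ∀ i, ∀ y ∈ D i, lft p ⬝ᵥ y = - (ε i * p.2) := by
        rintro i _ ⟨y, hy, rfl⟩
        rw [lft_emb, h]; simp
      let i : Fin d := ⟨0, hd⟩
      obtain ⟨y, hy⟩ := hDne i
      have hnn := hv i y (hDK i hy)
      rw [hpos i y hy] at hnn
      have := hull_pos (hD i) (hDne i) (w := lft p) (by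
        intro z hz
        rw [hpos i z hz]
        exact lt_of_le_of_ne hnn (neg_ne_zero.2 (mul_ne_zero (hε0 i) hp2)).symm) (x i) (hx i)
      rw [hvx i] at this
      exact lt_irrefl _ this
    have hpos : 0 < ‖p.1‖⁻¹ := inv_pos.2 (norm_pos_iff.2 hp1)
    have hx0 : ∀ i, lft (‖p.1‖⁻¹ • p) ⬝ᵥ x i = 0 := by
      intro i; rw [lft_smul, smul_dotProduct, hvx i, smul_zero]
    refine ⟨‖p.1‖⁻¹ • p, (hmem _).2 ⟨?_, ⟨x, hx, hx0⟩, fun i y hy => ?_⟩, x, hx, hx0, ?_⟩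
    · rw [Prod.smul_fst, norm_smul, norm_inv, norm_norm, inv_mul_cancel₀ (norm_ne_zero_iff.2 hp1)]
    · rw [lft_smul, smul_dotProduct]
      exact mul_nonneg hpos.le (hv i y hy)
    · rw [lft_smul, ori_smul]
      have := mul_pos hpos ho
      linarith
  have huniq : ∀ s : ℝ, ∀ p ∈ S, ∀ q ∈ S, ∀ x y : Fin d → Fin (d+1) → ℝ,
      (∀ i, x i ∈ K i) → (∀ i, lft p ⬝ᵥ x i = 0) → 0 < s * ori x (lft p) →
      (∀ i, y i ∈ K i) → (∀ i, lft q ⬝ᵥ y i = 0) → 0 < s * ori y (lft q) → q = p := by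
    intro s p hp q hq x y hx hpx hop hy hqy hoq
    obtain ⟨hp1, -, hp3⟩ := (hmem p).1 hp
    obtain ⟨hq1, -, hq3⟩ := (hmem q).1 hq
    obtain ⟨c, hc, h⟩ := unique_ray hKsep hKconv s hx hy hpx hqy hp3 hq3 hop hoq
    rw [← lft_smul] at h
    have h := lft_inj h
    rw [h, Prod.smul_fst, norm_smul, hp1, Real.norm_eq_abs, abs_of_pos hc, mul_one] at hq1
    rw [h, hq1, one_smul]
  obtain ⟨p, hp, x, hx, hpx, hop⟩ := hex 1 one_ne_zero
  obtain ⟨q, hq, y, hy, hqy, hoq⟩ := hex (-1) (by norm_num)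
  rw [Set.encard_eq_two]
  refine ⟨p, q, ?_, Set.Subset.antisymm ?_ ?_⟩
  · rintro rfl
    have := ori_pos_congr hKsep hKconv 1 hx hy hpx hqy hop
    linarith
  · intro r hr
    obtain ⟨-, ⟨z, hz, hrz⟩, -⟩ := (hmem r).1 hr
    rcases lt_or_gt_of_ne (ori_ne hKsep hz (hlift0 r hr) hrz) with h | h
    · exact Or.inr (huniq (-1) q hq r hr y z hy hqy hoq hz hrz (by linarith))
    · exact Or.inl (huniq 1 p hp r hr x z hx hpx hop hz hrz (by linarith))
  · rintro r (rfl | rfl)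
    · exact hp
    · exact hq
end
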